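/- arXiv:1712.01542 — 7 statements merged into one kernel-verified Lean document; each statement's English description precedes it below -/
import Mathlib

section
/- Let L be a finite-dimensional Lie algebra over a field F which is the central product of two ideals A and B (i.e. L = A + B, [A,B] = 0, and A ∩ B ⊆ Z(L)) such that [A,A] ∩ [B,B] ≠ 0. Then L is not capable. -/
open Module

universe u

/-- A witness to the capability of a Lie algebra `L` over `F`: a Lie algebra `E`
together with an isomorphism `L ≃ E ⧸ Z(E)`. -/
structure CapableWitness (F : Type u) (L : Type u) [Field F] [LieRing L] [LieAlgebra F L] where
  carrier : Type u
  [lieRing : LieRing carrier]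
  [lieAlgebra : LieAlgebra F carrier]
  equiv : L ≃ₗ⁅F⁆ (carrier ⧸ LieAlgebra.center F carrier)

/-- A Lie algebra `L` over a field `F` is capable if there exists a Lie algebra `E` over `F`
with `L ≅ E ⧸ Z(E)`. -/
def IsCapable (F : Type u) (L : Type u) [Field F] [LieRing L] [LieAlgebra F L] : Prop :=
  Nonempty (CapableWitness F L)

theorem lift_comm_aux {F L E : Type*} [Field F] [LieRing L] [LieAlgebra F L]
    [LieRing E] [LieAlgebra F E] (f : E →ₗ⁅F⁆ L) (hf : Function.Surjective f)
    (hker : ∀ e, f e = 0 → ∀ y : E, ⁅y, e⁆ = 0) (A B : LieIdeal F L)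
    (hAB : ∀ a ∈ A, ∀ b ∈ B, ⁅a, b⁆ = 0) (x : L) (hx : x ∈ ⁅A, A⁆) :
    ∀ e, f e = x → ∀ b, f b ∈ B → ⁅b, e⁆ = 0 := by
  have hx' : x ∈ (⁅A, A⁆ : LieIdeal F L).toSubmodule := hx
  rw [LieSubmodule.lieIdeal_oper_eq_linear_span'] at hx'
  suffices h : ∃ e, f e = x ∧ ∀ b, f b ∈ B → ⁅b, e⁆ = 0 by
    obtain ⟨e₀, he₀, h₀⟩ := h
    intro e he b hb
    have h1 := hker (e - e₀) (by rw [map_sub, he, he₀, sub_self]) b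
    rw [lie_sub, h₀ b hb, sub_zero] at h1
    exact h1
  clear hx
  induction hx' using Submodule.span_induction with
  | mem x hx =>
    obtain ⟨a, ha, c, hc, rfl⟩ := hx
    obtain ⟨a, rfl⟩ := hf a
    obtain ⟨c, rfl⟩ := hf c
    refine ⟨⁅a, c⁆, LieHom.map_lie f a c, fun b hb => ?_⟩
    have key : ∀ d, f d ∈ A → ∀ y : E, ⁅y, ⁅b, d⁆⁆ = 0 := fun d hd y => by
      apply hker
      rw [LieHom.map_lie, ← lie_skew, hAB _ hd _ hb, neg_zero]
    rw [leibniz_lie, key c hc a, add_zero, ← lie_skew, key a ha c, neg_zero]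
  | zero => exact ⟨0, map_zero f, fun b _ => lie_zero b⟩
  | add x y _ _ hx hy =>
    obtain ⟨e, he, h⟩ := hx
    obtain ⟨e', he', h'⟩ := hy
    exact ⟨e + e', by rw [map_add, he, he'], fun b hb => by
      rw [lie_add, h b hb, h' b hb, add_zero]⟩
  | smul t x _ hx =>
    obtain ⟨e, he, h⟩ := hx
    exact ⟨t • e, by rw [map_smul, he], fun b hb => by rw [lie_smul, h b hb, smul_zero]⟩

/-- A central product `L = A ∔ B` with `[A,A] ∩ [B,B] ≠ 0` is not capable. -/
theorem central_product_not_capable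
    (F L : Type u) [Field F] [LieRing L] [LieAlgebra F L] [FiniteDimensional F L]
    (A B : LieIdeal F L)
    (hsum : A ⊔ B = ⊤)
    (hcomm : ⁅A, B⁆ = (⊥ : LieIdeal F L))
    (hint : A ⊓ B ≤ LieAlgebra.center F L)
    (hder : ⁅A, A⁆ ⊓ ⁅B, B⁆ ≠ (⊥ : LieIdeal F L)) :
    ¬ IsCapable F L := by
  rintro ⟨⟨E, φ⟩⟩
  apply hder
  let q : E →ₗ⁅F⁆ (E ⧸ LieAlgebra.center F E) :=
    { toLinearMap := (LieSubmodule.Quotient.mk' (LieAlgebra.center F E) : E →ₗ[F] _)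
      map_lie' := fun {x y} => LieSubmodule.Quotient.mk_bracket _ x y }
  let f : E →ₗ⁅F⁆ L := (φ.symm : (E ⧸ LieAlgebra.center F E) →ₗ⁅F⁆ L).comp q
  have hf0 : ∀ e, f e = φ.symm (LieSubmodule.Quotient.mk e) := fun e => rfl
  have hf : Function.Surjective f := by
    intro x
    obtain ⟨e, he⟩ := LieSubmodule.Quotient.surjective_mk' (LieAlgebra.center F E) (φ x)
    refine ⟨e, ?_⟩
    have he' : (LieSubmodule.Quotient.mk e : E ⧸ LieAlgebra.center F E) = φ x := he
    rw [hf0, he', LieEquiv.symm_apply_apply]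
  have hker : ∀ e, f e = 0 ↔ ∀ y : E, ⁅y, e⁆ = 0 := by
    intro e
    rw [← LieModule.mem_maxTrivSubmodule (R := F), hf0]
    rw [← LieSubmodule.Quotient.mk_eq_zero (N := LieAlgebra.center F E)]
    constructor
    · intro h
      have := congrArg φ h
      rwa [LieEquiv.apply_symm_apply, map_zero] at this
    · intro h
      exact (congrArg φ.symm h).trans (map_zero φ.symm)
  have hAB : ∀ a ∈ A, ∀ b ∈ B, ⁅a, b⁆ = 0 := fun a ha b hb => by
    have := LieSubmodule.lie_mem_lie ha hb
    rw [hcomm] at this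
    exact (LieSubmodule.mem_bot _).1 this
  have hBA : ∀ b ∈ B, ∀ a ∈ A, ⁅b, a⁆ = 0 := fun b hb a ha => by
    rw [← lie_skew, hAB a ha b hb, neg_zero]
  rw [LieSubmodule.eq_bot_iff]
  rintro x hx
  obtain ⟨hxA, hxB⟩ := (LieSubmodule.mem_inf _ _ _).1 hx
  obtain ⟨e, rfl⟩ := hf x
  rw [hker]
  intro y
  have hy : f y ∈ A ⊔ B := by rw [hsum]; exact LieSubmodule.mem_top _
  obtain ⟨a, ha, b, hb, hab⟩ := (LieSubmodule.mem_sup _ _ _).1 hy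
  obtain ⟨a, rfl⟩ := hf a
  obtain ⟨b, rfl⟩ := hf b
  have h1 := lift_comm_aux f hf (fun e => (hker e).1) A B hAB _ hxA e rfl b hb
  have h2 := lift_comm_aux f hf (fun e => (hker e).1) B A hBA _ hxB e rfl a ha
  have h3 := (hker (y - (a + b))).1 (by rw [map_sub, map_add, hab, sub_self]) e
  rw [← lie_skew, neg_eq_zero, sub_lie, add_lie, h1, h2, add_zero, sub_zero] at h3
  exact h3
end

section
/- Let L be a 7-dimensional Lie algebra over a field F of characteristic 2 which is a generalized Heisenberg Lie algebra of rank 2, i.e. [L,L] = Z(L) and dim [L,L] = 2. Then L is isomorphic to the Lie algebra with basis x₁,…,x₇ and nonzero brackets [x₁,x₂] = x₆ = [x₃,x₄], [x₁,x₅] = x₇ = [x₂,x₃], or to the Lie algebra with basis x₁,…,x₇ and nonzero brackets [x₁,x₂] = x₆, [x₁,x₄] = x₇ = [x₃,x₅]. -/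
open Module

universe u

/-- `L` is isomorphic to `L₁ = 27A`: basis `x₁,…,x₇` with `[x₁,x₂]=x₆=[x₃,x₄]`, `[x₁,x₅]=x₇=[x₂,x₃]`. -/
def IsL1 (F : Type u) (L : Type u) [Field F] [LieRing L] [LieAlgebra F L] : Prop :=
  ∃ b : Basis (Fin 7) F L,
    ⁅b 0, b 1⁆ = b 5 ∧
    ⁅b 2, b 3⁆ = b 5 ∧
    ⁅b 0, b 4⁆ = b 6 ∧
    ⁅b 1, b 2⁆ = b 6 ∧
    ∀ i j : Fin 7, i < j → (i, j) ≠ (0, 1) → (i, j) ≠ (2, 3) → (i, j) ≠ (0, 4) → (i, j) ≠ (1, 2) → ⁅b i, b j⁆ = 0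

/-- `L` is isomorphic to `L₂ = 27B`: basis `x₁,…,x₇` with `[x₁,x₂]=x₆`, `[x₁,x₄]=x₇=[x₃,x₅]`. -/
def IsL2 (F : Type u) (L : Type u) [Field F] [LieRing L] [LieAlgebra F L] : Prop :=
  ∃ b : Basis (Fin 7) F L,
    ⁅b 0, b 1⁆ = b 5 ∧
    ⁅b 0, b 3⁆ = b 6 ∧
    ⁅b 2, b 4⁆ = b 6 ∧
    ∀ i j : Fin 7, i < j → (i, j) ≠ (0, 1) → (i, j) ≠ (0, 3) → (i, j) ≠ (2, 4) → ⁅b i, b j⁆ = 0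

set_option linter.all false
section helpers
variable {F L : Type u} [Field F] [LieRing L] [LieAlgebra F L] [FiniteDimensional F L]

theorem aux_mkL2 (hdim : finrank F L = 7) (p q r t s z w : L)
    (hpq : ⁅p, q⁆ = z) (hpt : ⁅p, t⁆ = w) (hrs : ⁅r, s⁆ = w)
    (hpr : ⁅p, r⁆ = 0) (hps : ⁅p, s⁆ = 0) (hqr : ⁅q, r⁆ = 0) (hqt : ⁅q, t⁆ = 0)
    (hqs : ⁅q, s⁆ = 0) (hrt : ⁅r, t⁆ = 0) (hts : ⁅t, s⁆ = 0)
    (hz : ∀ x : L, ⁅x, z⁆ = 0) (hw : ∀ x : L, ⁅x, w⁆ = 0)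
    (hind : ∀ a b : F, a • z + b • w = 0 → a = 0 ∧ b = 0) : IsL2 F L := by
  have hqp : ⁅q, p⁆ = -z := by rw [← hpq, lie_skew]
  have hsr : ⁅s, r⁆ = -w := by rw [← hrs, lie_skew]
  have hrp : ⁅r, p⁆ = 0 := by rw [← lie_skew, hpr, neg_zero]
  have hsp : ⁅s, p⁆ = 0 := by rw [← lie_skew, hps, neg_zero]
  have hrq : ⁅r, q⁆ = 0 := by rw [← lie_skew, hqr, neg_zero]
  have hsq : ⁅s, q⁆ = 0 := by rw [← lie_skew, hqs, neg_zero]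
  have hst : ⁅s, t⁆ = 0 := by rw [← lie_skew, hts, neg_zero]
  have hli : LinearIndependent F ![p, q, r, t, s, z, w] := by
    rw [Fintype.linearIndependent_iff]
    intro g hg
    simp only [Fin.sum_univ_succ, Fin.sum_univ_zero, Matrix.cons_val_zero, Matrix.cons_val_succ] at hg
    simp only [Fin.isValue, Fin.succ_zero_eq_one, Fin.reduceSucc, add_zero] at hg
    have ep := congrArg (fun y => ⁅p, y⁆) hg
    have eq := congrArg (fun y => ⁅q, y⁆) hg
    have er := congrArg (fun y => ⁅r, y⁆) hg
    have es := congrArg (fun y => ⁅s, y⁆) hg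
    simp only [lie_add, lie_smul, lie_self, lie_zero, hpq, hpt, hrs, hpr, hps, hqr, hqt, hqs, hrt, hz, hw, hqp, hsr, hrp, hsp, hrq, hsq, hst, smul_zero, zero_add, add_zero] at ep eq er es
    obtain ⟨h1, h3⟩ := hind _ _ ep
    have h0 := (hind (-(g 0)) 0 (by rw [← eq]; simp)).1
    have h4 := (hind 0 (g 4) (by rw [← er]; simp)).2
    have h2 := (hind 0 (-(g 2)) (by rw [← es]; simp)).2
    rw [neg_eq_zero] at h0 h2
    simp only [h0, h1, h2, h3, h4, zero_smul, zero_add] at hg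
    obtain ⟨h5, h6⟩ := hind _ _ hg
    intro i
    fin_cases i <;> assumption
  refine ⟨basisOfLinearIndependentOfCardEqFinrank hli (by simp [hdim]), ?_⟩
  simp only [coe_basisOfLinearIndependentOfCardEqFinrank]
  refine ⟨hpq, hpt, hrs, ?_⟩
  intro i j hij h1 h2 h3
  fin_cases i <;> fin_cases j <;> first | (exfalso; revert hij; decide) | (exact absurd rfl h1) | (exact absurd rfl h2) | (exact absurd rfl h3) | assumption | exact hz _ | exact hw _

theorem aux_mkL1 (hdim : finrank F L = 7) (p x q v t z w : L)
    (hpx : ⁅p, x⁆ = z) (hqv : ⁅q, v⁆ = z) (hpt : ⁅p, t⁆ = w) (hxq : ⁅x, q⁆ = w)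
    (hpq : ⁅p, q⁆ = 0) (hpv : ⁅p, v⁆ = 0) (hxv : ⁅x, v⁆ = 0) (hxt : ⁅x, t⁆ = 0)
    (hqt : ⁅q, t⁆ = 0) (hvt : ⁅v, t⁆ = 0)
    (hz : ∀ x : L, ⁅x, z⁆ = 0) (hw : ∀ x : L, ⁅x, w⁆ = 0)
    (hind : ∀ a b : F, a • z + b • w = 0 → a = 0 ∧ b = 0) : IsL1 F L := by
  have hxp : ⁅x, p⁆ = -z := by rw [← hpx, lie_skew]
  have hqx : ⁅q, x⁆ = -w := by rw [← hxq, lie_skew]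
  have hqp : ⁅q, p⁆ = 0 := by rw [← lie_skew, hpq, neg_zero]
  have hli : LinearIndependent F ![p, x, q, v, t, z, w] := by
    rw [Fintype.linearIndependent_iff]
    intro g hg
    simp only [Fin.sum_univ_succ, Fin.sum_univ_zero, Matrix.cons_val_zero, Matrix.cons_val_succ] at hg
    simp only [Fin.isValue, Fin.succ_zero_eq_one, Fin.reduceSucc, add_zero] at hg
    have ep := congrArg (fun y => ⁅p, y⁆) hg
    have eq := congrArg (fun y => ⁅q, y⁆) hg
    have er := congrArg (fun y => ⁅x, y⁆) hg
    simp only [lie_add, lie_smul, lie_self, lie_zero, hpq, hpt, hpx, hqv, hxq, hpv, hxv, hxt, hqt, hz, hw, hxp, hqx, hqp, smul_zero, zero_add, add_zero] at ep eq er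
    obtain ⟨h1, h4⟩ := hind _ _ ep
    have h3 := (hind (g 3) (-(g 1)) (by rw [← eq]; simp [add_comm])).1
    obtain ⟨h0, h2⟩ := hind (-(g 0)) (g 2) (by rw [← er]; simp)
    rw [neg_eq_zero] at h0
    simp only [h0, h1, h2, h3, h4, zero_smul, zero_add] at hg
    obtain ⟨h5, h6⟩ := hind _ _ hg
    intro i
    fin_cases i <;> assumption
  refine ⟨basisOfLinearIndependentOfCardEqFinrank hli (by simp [hdim]), ?_⟩
  simp only [coe_basisOfLinearIndependentOfCardEqFinrank]
  refine ⟨hpx, hqv, hpt, hxq, ?_⟩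
  intro i j hij h1 h2 h3 h4
  fin_cases i <;> fin_cases j <;> first | (exfalso; revert hij; decide) | (exact absurd rfl h1) | (exact absurd rfl h2) | (exact absurd rfl h3) | (exact absurd rfl h4) | assumption | exact hz _ | exact hw _

/-- Coordinates on the derived algebra. -/
structure AuxCoord (α γ : L →ₗ[F] F) (z w : L) : Prop where
  dim : finrank F L = 7
  dimZ : finrank F (LieAlgebra.center F L).toSubmodule = 2
  az : α z = 1
  aw : α w = 0
  gz : γ z = 0
  gw : γ w = 1
  br : ∀ x y : L, ⁅x, y⁆ = α ⁅x, y⁆ • z + γ ⁅x, y⁆ • w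
  cz : ∀ x : L, ⁅x, z⁆ = 0
  cw : ∀ x : L, ⁅x, w⁆ = 0
  na : ∃ x y : L, α ⁅x, y⁆ ≠ 0
  ng : ∃ x y : L, γ ⁅x, y⁆ ≠ 0

theorem AuxCoord.swap {α γ : L →ₗ[F] F} {z w : L} (h : AuxCoord α γ z w) : AuxCoord γ α w z :=
  ⟨h.dim, h.dimZ, h.gw, h.gz, h.aw, h.az, fun x y => by rw [add_comm]; exact h.br x y,
    h.cw, h.cz, h.ng, h.na⟩

theorem aux_mem (x : L) : x ∈ (LieAlgebra.center F L).toSubmodule ↔ ∀ y : L, ⁅x, y⁆ = 0 := by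
  rw [LieSubmodule.mem_toSubmodule, LieModule.mem_maxTrivSubmodule]
  constructor <;> intro h y
  · rw [← lie_skew, h, neg_zero]
  · rw [← lie_skew, h, neg_zero]

/-- four functionals have a noncentral common zero -/
theorem aux_four (hdim : finrank F L = 7)
    (hZ : finrank F (LieAlgebra.center F L).toSubmodule = 2) (f1 f2 f3 f4 : L →ₗ[F] F) :
    ∃ t : L, t ∉ (LieAlgebra.center F L).toSubmodule ∧ f1 t = 0 ∧ f2 t = 0 ∧ f3 t = 0 ∧ f4 t = 0 := by
  set f := f1.prod (f2.prod (f3.prod f4)) with hf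
  have h1 := f.finrank_range_add_finrank_ker
  have h2 : finrank F f.range ≤ 4 := by
    refine (Submodule.finrank_le _).trans ?_
    simp
  have h3 : ¬ (f.ker ≤ (LieAlgebra.center F L).toSubmodule) := by
    intro h
    have := Submodule.finrank_mono h
    omega
  obtain ⟨t, ht, htz⟩ := SetLike.not_le_iff_exists.1 h3
  refine ⟨t, htz, ?_⟩
  simpa [hf, Prod.ext_iff] using ht

theorem aux_four_dual (hdim : finrank F L = 7)
    (hZ : finrank F (LieAlgebra.center F L).toSubmodule = 2) (f1 f2 f3 f4 : L →ₗ[F] F)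
    (e1 e2 e3 e4 : L)
    (hc : ∀ z ∈ (LieAlgebra.center F L).toSubmodule, f1 z = 0 ∧ f2 z = 0 ∧ f3 z = 0 ∧ f4 z = 0)
    (h11 : f1 e1 = 1) (h12 : f1 e2 = 0) (h13 : f1 e3 = 0) (h14 : f1 e4 = 0)
    (h21 : f2 e1 = 0) (h22 : f2 e2 = 1) (h23 : f2 e3 = 0) (h24 : f2 e4 = 0)
    (h31 : f3 e1 = 0) (h32 : f3 e2 = 0) (h33 : f3 e3 = 1) (h34 : f3 e4 = 0)
    (h41 : f4 e1 = 0) (h42 : f4 e2 = 0) (h43 : f4 e3 = 0) (h44 : f4 e4 = 1) :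
    ∃ t : L, t ∉ (LieAlgebra.center F L).toSubmodule ∧ f1 t = 0 ∧ f2 t = 0 ∧ f3 t = 0 ∧ f4 t = 0 ∧
      ∀ m : L, ∃ c : F, ∃ y : L, (∀ x : L, ⁅x, y⁆ = 0) ∧
        m = f1 m • e1 + f2 m • e2 + f3 m • e3 + f4 m • e4 + c • t + y := by
  obtain ⟨t, htz, ht1, ht2, ht3, ht4⟩ := aux_four hdim hZ f1 f2 f3 f4
  refine ⟨t, htz, ht1, ht2, ht3, ht4, ?_⟩
  set f := f1.prod (f2.prod (f3.prod f4)) with hf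
  have h1 := f.finrank_range_add_finrank_ker
  have hs : f.range = ⊤ := by
    rw [LinearMap.range_eq_top]
    rintro ⟨a, b, c, d⟩
    refine ⟨a • e1 + b • e2 + c • e3 + d • e4, ?_⟩
    simp [hf, *]
  have h2 : finrank F f.range = 4 := by
    rw [hs, finrank_top]; simp
  have hle : (F ∙ t) ⊔ (LieAlgebra.center F L).toSubmodule ≤ f.ker := by
    apply sup_le
    · rw [Submodule.span_singleton_le_iff_mem]
      simp [hf, *]
    · intro z hz
      obtain ⟨a, b, c, d⟩ := hc z hz
      simp [hf, *]
  have hlt : (LieAlgebra.center F L).toSubmodule < (F ∙ t) ⊔ (LieAlgebra.center F L).toSubmodule := by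
    rw [right_lt_sup, Submodule.span_singleton_le_iff_mem]
    exact htz
  have h3 := Submodule.finrank_lt_finrank_of_lt hlt
  have heq := Submodule.eq_of_le_of_finrank_le hle (by omega)
  intro m
  have hm : m - (f1 m • e1 + f2 m • e2 + f3 m • e3 + f4 m • e4) ∈ f.ker := by
    simp [hf, *]
  rw [← heq, Submodule.mem_sup] at hm
  obtain ⟨a, ha, y, hy, hay⟩ := hm
  obtain ⟨c, rfl⟩ := Submodule.mem_span_singleton.1 ha
  refine ⟨c, y, ?_, ?_⟩
  · intro x
    rw [← lie_skew, (aux_mem y).1 hy, neg_zero]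
  · rw [add_assoc, hay]; abel

/-- rank two condition -/
def AuxHB (α : L →ₗ[F] F) (p q : L) : Prop :=
  α ⁅p, q⁆ = 1 ∧ ∀ r s : L, α ⁅p, r⁆ = 0 → α ⁅q, r⁆ = 0 → α ⁅p, s⁆ = 0 → α ⁅q, s⁆ = 0 →
    α ⁅r, s⁆ = 0

theorem aux_skew (α : L →ₗ[F] F) (x y : L) : α ⁅y, x⁆ = - α ⁅x, y⁆ := by
  rw [← lie_skew, map_neg]

/-- functional `y ↦ α ⁅x, y⁆` -/
def auxf (α : L →ₗ[F] F) (x : L) : L →ₗ[F] F := α ∘ₗ (LieAlgebra.ad F L x : L →ₗ[F] L)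

theorem auxf_apply (α : L →ₗ[F] F) (x y : L) : auxf α x y = α ⁅x, y⁆ := rfl

theorem aux_ind {α γ : L →ₗ[F] F} {z w : L} (h : AuxCoord α γ z w) (y : L) (hy : α y ≠ 0)
    (a b : F) (hab : a • y + b • w = 0) : a = 0 ∧ b = 0 := by
  have h1 := congrArg α hab
  simp only [map_add, map_smul, smul_eq_mul, h.aw, mul_zero, add_zero, map_zero] at h1
  have ha : a = 0 := by simpa [hy] using h1
  have h2 := congrArg γ hab
  simp only [ha, map_add, map_smul, smul_eq_mul, h.gw, zero_mul, zero_add, mul_one, map_zero] at h2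
  exact ⟨ha, h2⟩

theorem aux_cbr {α γ : L →ₗ[F] F} {z w : L} (h : AuxCoord α γ z w) (x y m : L) :
    ⁅m, ⁅x, y⁆⁆ = 0 := by
  rw [h.br x y, lie_add, lie_smul, lie_smul, h.cz, h.cw]; simp

theorem aux_zero {α γ : L →ₗ[F] F} {z w : L} (h : AuxCoord α γ z w) {x y : L}
    (h1 : α ⁅x, y⁆ = 0) (h2 : γ ⁅x, y⁆ = 0) : ⁅x, y⁆ = 0 := by
  rw [h.br x y, h1, h2]; simp

theorem aux_caseB {α γ : L →ₗ[F] F} {z w : L} (h : AuxCoord α γ z w) (p0 q0 : L)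
    (hB : AuxHB α p0 q0) : IsL2 F L := by
  obtain ⟨hpq0, hB⟩ := hB
  have hqp0 : α ⁅q0, p0⁆ = -1 := by rw [aux_skew, hpq0]
  have hR : ∀ r, α ⁅p0, r⁆ = 0 → α ⁅q0, r⁆ = 0 → ∀ m, α ⁅r, m⁆ = 0 := by
    intro r h1 h2 m
    have h1' : α ⁅r, p0⁆ = 0 := by rw [aux_skew, h1, neg_zero]
    have h2' : α ⁅r, q0⁆ = 0 := by rw [aux_skew, h2, neg_zero]
    have hs := aux_skew α m q0
    have := hB r (m - α ⁅m, q0⁆ • p0 - α ⁅p0, m⁆ • q0) h1 h2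
      (by simp only [lie_sub, lie_smul, map_sub, map_smul, smul_eq_mul, lie_self, map_zero, hpq0]; ring)
      (by simp only [lie_sub, lie_smul, map_sub, map_smul, smul_eq_mul, lie_self, map_zero, hqp0, hs]; ring)
    simpa only [lie_sub, lie_smul, map_sub, map_smul, smul_eq_mul, h1', h2', mul_zero, sub_zero] using this
  have hR2 : ∀ r s : L, ∀ m : L, α ⁅p0, r⁆ = 0 → α ⁅q0, r⁆ = 0 → α ⁅m, r⁆ = 0 := by
    intro r s m h1 h2
    rw [aux_skew, hR r h1 h2, neg_zero]
  obtain ⟨r, s, hr1, hr2, hs1, hs2, hrs⟩ : ∃ r s : L, α ⁅p0, r⁆ = 0 ∧ α ⁅q0, r⁆ = 0 ∧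
      α ⁅p0, s⁆ = 0 ∧ α ⁅q0, s⁆ = 0 ∧ γ ⁅r, s⁆ = 1 := by
    by_contra hcon
    have hcon' : ∀ r s : L, α ⁅p0, r⁆ = 0 → α ⁅q0, r⁆ = 0 → α ⁅p0, s⁆ = 0 → α ⁅q0, s⁆ = 0 →
        γ ⁅r, s⁆ = 0 := by
      intro r s h1 h2 h3 h4
      by_contra h5
      refine hcon ⟨r, (γ ⁅r, s⁆)⁻¹ • s, h1, h2, ?_, ?_, ?_⟩
      · rw [lie_smul, map_smul, h3, smul_zero]
      · rw [lie_smul, map_smul, h4, smul_zero]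
      · rw [lie_smul, map_smul, smul_eq_mul, inv_mul_cancel₀ h5]
    obtain ⟨u, huZ, h1, h2, h3, h4⟩ := aux_four h.dim h.dimZ (auxf α p0) (auxf α q0) (auxf γ p0) (auxf γ q0)
    simp only [auxf_apply] at h1 h2 h3 h4
    apply huZ
    rw [aux_mem]
    intro m
    apply aux_zero h (hR u h1 h2 m)
    have h3' : γ ⁅u, p0⁆ = 0 := by rw [aux_skew, h3, neg_zero]
    have h4' : γ ⁅u, q0⁆ = 0 := by rw [aux_skew, h4, neg_zero]
    have hs := aux_skew α m q0
    have := hcon' u (m - α ⁅m, q0⁆ • p0 - α ⁅p0, m⁆ • q0) h1 h2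
      (by simp only [lie_sub, lie_smul, map_sub, map_smul, smul_eq_mul, lie_self, map_zero, hpq0]; ring)
      (by simp only [lie_sub, lie_smul, map_sub, map_smul, smul_eq_mul, lie_self, map_zero, hqp0, hs]; ring)
    simpa only [lie_sub, lie_smul, map_sub, map_smul, smul_eq_mul, h3', h4', mul_zero, sub_zero] using this
  have hsr : γ ⁅s, r⁆ = -1 := by rw [aux_skew, hrs]
  have key : ∀ m : L, ∃ m' : L, (∀ y, α ⁅m', y⁆ = α ⁅m, y⁆) ∧ ⁅m', r⁆ = 0 ∧ ⁅m', s⁆ = 0 := by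
    intro m
    refine ⟨m - γ ⁅m, s⁆ • r + γ ⁅m, r⁆ • s, ?_, ?_, ?_⟩
    · intro y
      simp only [sub_lie, add_lie, smul_lie, map_sub, map_add, map_smul, hR r hr1 hr2, hR s hs1 hs2]
      simp
    · apply aux_zero h
      · exact hR2 r r _ hr1 hr2
      · simp only [sub_lie, add_lie, smul_lie, map_sub, map_add, map_smul, lie_self, map_zero, hsr, smul_eq_mul]
        ring
    · apply aux_zero h
      · exact hR2 s s _ hs1 hs2
      · simp only [sub_lie, add_lie, smul_lie, map_sub, map_add, map_smul, lie_self, map_zero, hrs, smul_eq_mul]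
        ring
  obtain ⟨p, hp, hpr, hps⟩ := key p0
  obtain ⟨q, hq, hqr, hqs⟩ := key q0
  have hpq : α ⁅p, q⁆ = 1 := by rw [hp, aux_skew, hq, hqp0, neg_neg]
  have hqp : α ⁅q, p⁆ = -1 := by rw [aux_skew, hpq]
  have skew0 : ∀ {x y : L}, ⁅x, y⁆ = 0 → ⁅y, x⁆ = 0 := by
    intro x y hxy; rw [← lie_skew, hxy, neg_zero]
  obtain ⟨t, htZ, ht1, ht2, ht3, ht4, hspan⟩ := aux_four_dual h.dim h.dimZ
    (-auxf α q) (auxf α p) (-auxf γ s) (auxf γ r) p q r s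
    (by
      intro y hy
      rw [aux_mem] at hy
      have hy' : ∀ x : L, ⁅x, y⁆ = 0 := fun x => skew0 (hy x)
      simp [auxf_apply, hy'])
    (by simp [auxf_apply, hqp]) (by simp [auxf_apply]) (by simp [auxf_apply, hqr]) (by simp [auxf_apply, hqs])
    (by simp [auxf_apply]) (by simp [auxf_apply, hpq]) (by simp [auxf_apply, hpr]) (by simp [auxf_apply, hps])
    (by simp [auxf_apply, skew0 hps]) (by simp [auxf_apply, skew0 hqs]) (by simp [auxf_apply, hsr]) (by simp [auxf_apply])
    (by simp [auxf_apply, skew0 hpr]) (by simp [auxf_apply, skew0 hqr]) (by simp [auxf_apply]) (by simp [auxf_apply, hrs])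
  simp only [LinearMap.neg_apply, auxf_apply, neg_eq_zero] at ht1 ht2 ht3 ht4 hspan
  have htp0 : α ⁅p0, t⁆ = 0 := by rw [← hp, ht2]
  have htq0 : α ⁅q0, t⁆ = 0 := by rw [← hq, ht1]
  have hrt : ⁅r, t⁆ = 0 := aux_zero h (hR2 t t _ htp0 htq0) ht4
  have hst : ⁅s, t⁆ = 0 := aux_zero h (hR2 t t _ htp0 htq0) ht3
  have hbr : ∀ m : L, ⁅m, t⁆ = γ ⁅m, t⁆ • w := by
    intro m
    conv_lhs => rw [h.br m t, hR2 t t _ htp0 htq0]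
    simp
  have hne : γ ⁅p, t⁆ ≠ 0 ∨ γ ⁅q, t⁆ ≠ 0 := by
    by_contra hcon
    push Not at hcon
    have e1 : ⁅p, t⁆ = 0 := by rw [hbr, hcon.1, zero_smul]
    have e2 : ⁅q, t⁆ = 0 := by rw [hbr, hcon.2, zero_smul]
    apply htZ
    rw [aux_mem]
    intro m
    obtain ⟨c, y, hy, hm⟩ := hspan m
    rw [hm]
    simp only [lie_add, lie_smul, hy, skew0 e1, skew0 e2, skew0 hrt, skew0 hst, lie_self, smul_zero, add_zero]
  have fin : ∀ p q : L, α ⁅p, q⁆ ≠ 0 → ⁅p, r⁆ = 0 → ⁅p, s⁆ = 0 → ⁅q, r⁆ = 0 → ⁅q, s⁆ = 0 →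
      γ ⁅p, t⁆ ≠ 0 → IsL2 F L := by
    intro p q hpq hpr hps hqr hqs hpt
    set a := γ ⁅p, t⁆ with ha
    refine aux_mkL2 h.dim p (q - (γ ⁅q, t⁆ * a⁻¹) • p) r (a⁻¹ • t) s ⁅p, q⁆ w ?_ ?_ ?_ hpr hps ?_ ?_ ?_ ?_ ?_
      (aux_cbr h _ _) h.cw (aux_ind h _ hpq)
    · simp
    · rw [lie_smul, hbr, smul_smul, ← ha, inv_mul_cancel₀ hpt, one_smul]
    · rw [h.br r s, hR r hr1 hr2, hrs]; simp
    · simp [hqr, hpr]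
    · rw [lie_smul, sub_lie, smul_lie, hbr q, hbr p, ← ha, smul_smul, mul_assoc, inv_mul_cancel₀ hpt]; simp [h.gw]
    · simp [hqs, hps]
    · simp [hrt]
    · simp [skew0 hst]
  rcases hne with h1 | h1
  · exact fin p q (by rw [hpq]; exact one_ne_zero) hpr hps hqr hqs h1
  · exact fin q p (by rw [hqp]; simp) hqr hqs hpr hps h1

/-- complete a hyperbolic pair to a symplectic basis -/
theorem aux_sympl {α γ : L →ₗ[F] F} {z w : L} (h : AuxCoord α γ z w) (hnB : ∀ p q, ¬ AuxHB α p q)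
    (v q : L) (hvq : α ⁅v, q⁆ = 1) :
    ∃ c d u : L, α ⁅c, d⁆ = 1 ∧ α ⁅v, c⁆ = 0 ∧ α ⁅v, d⁆ = 0 ∧ α ⁅q, c⁆ = 0 ∧ α ⁅q, d⁆ = 0 ∧
      u ∉ (LieAlgebra.center F L).toSubmodule ∧ (∀ m, α ⁅u, m⁆ = 0) ∧
      ∀ m : L, ∃ k : F, ∃ y : L, (∀ x : L, ⁅x, y⁆ = 0) ∧
        m = -α ⁅q, m⁆ • v + α ⁅v, m⁆ • q + -α ⁅d, m⁆ • c + α ⁅c, m⁆ • d + k • u + y := by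
  have hqv : α ⁅q, v⁆ = -1 := by rw [aux_skew, hvq]
  have h1 := hnB v q
  unfold AuxHB at h1
  push Not at h1
  obtain ⟨c, d', hvc, hqc, hvd, hqd, hcd⟩ := h1 hvq
  set d := (α ⁅c, d'⁆)⁻¹ • d' with hd
  have hcd1 : α ⁅c, d⁆ = 1 := by
    rw [hd, lie_smul, map_smul, smul_eq_mul, inv_mul_cancel₀ hcd]
  have hvd1 : α ⁅v, d⁆ = 0 := by rw [hd, lie_smul, map_smul, hvd, smul_zero]
  have hqd1 : α ⁅q, d⁆ = 0 := by rw [hd, lie_smul, map_smul, hqd, smul_zero]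
  clear_value d
  have hdc : α ⁅d, c⁆ = -1 := by rw [aux_skew, hcd1]
  have skew0 : ∀ {x y : L}, α ⁅x, y⁆ = 0 → α ⁅y, x⁆ = 0 := by
    intro x y hxy; rw [aux_skew, hxy, neg_zero]
  obtain ⟨u, huZ, hu1, hu2, hu3, hu4, hspan⟩ := aux_four_dual h.dim h.dimZ
    (-auxf α q) (auxf α v) (-auxf α d) (auxf α c) v q c d
    (by
      intro y hy
      rw [aux_mem] at hy
      have hy' : ∀ x : L, ⁅x, y⁆ = 0 := fun x => by rw [← lie_skew, hy, neg_zero]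
      simp [auxf_apply, hy'])
    (by simp [auxf_apply, hqv]) (by simp [auxf_apply]) (by simp [auxf_apply, hqc]) (by simp [auxf_apply, hqd1])
    (by simp [auxf_apply]) (by simp [auxf_apply, hvq]) (by simp [auxf_apply, hvc]) (by simp [auxf_apply, hvd1])
    (by simp [auxf_apply, skew0 hvd1]) (by simp [auxf_apply, skew0 hqd1]) (by simp [auxf_apply, hdc]) (by simp [auxf_apply])
    (by simp [auxf_apply, skew0 hvc]) (by simp [auxf_apply, skew0 hqc]) (by simp [auxf_apply]) (by simp [auxf_apply, hcd1])
  simp only [LinearMap.neg_apply, auxf_apply, neg_eq_zero] at hu1 hu2 hu3 hu4 hspan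
  refine ⟨c, d, u, hcd1, hvc, hvd1, hqc, hqd1, huZ, ?_, hspan⟩
  intro m
  obtain ⟨k, y, hy, hm⟩ := hspan m
  rw [hm]
  simp only [lie_add, lie_smul, map_add, map_smul, hy, skew0 hu1, skew0 hu2, skew0 hu3, skew0 hu4,
    lie_self, smul_zero, add_zero, map_zero]

theorem aux_rad {α γ : L →ₗ[F] F} {z w : L} (h : AuxCoord α γ z w) (hnB : ∀ p q, ¬ AuxHB α p q) :
    ∃ u : L, u ∉ (LieAlgebra.center F L).toSubmodule ∧ (∀ m, α ⁅u, m⁆ = 0) ∧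
      ∀ x : L, (∀ m, α ⁅x, m⁆ = 0) → ∃ k : F, ∀ m : L, ⁅x, m⁆ = k • ⁅u, m⁆ := by
  obtain ⟨x, y, hxy⟩ := h.na
  obtain ⟨c, d, u, hcd, hvc, hvd, hqc, hqd, huZ, hu, hspan⟩ := aux_sympl h hnB x ((α ⁅x, y⁆)⁻¹ • y)
    (by rw [lie_smul, map_smul, smul_eq_mul, inv_mul_cancel₀ hxy])
  refine ⟨u, huZ, hu, ?_⟩
  intro x' hx'
  have hx'' : ∀ m, α ⁅m, x'⁆ = 0 := fun m => by rw [aux_skew, hx', neg_zero]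
  obtain ⟨k, y', hy', hm⟩ := hspan x'
  refine ⟨k, fun m => ?_⟩
  have hy'' : ⁅y', m⁆ = 0 := by rw [← lie_skew, hy', neg_zero]
  simp only [hx'', neg_zero, zero_smul, zero_add] at hm
  rw [hm, add_lie, smul_lie, hy'', add_zero]

theorem aux_finA {α γ : L →ₗ[F] F} {z w : L} (h : AuxCoord α γ z w) (u v q c d : L)
    (hu : ∀ m, α ⁅u, m⁆ = 0) (hv : ∀ m, γ ⁅v, m⁆ = 0) (hvq : α ⁅v, q⁆ = 1)
    (hvc : α ⁅v, c⁆ = 0) (hvd : α ⁅v, d⁆ = 0) (huc : γ ⁅u, c⁆ ≠ 0) (hcd : α ⁅c, d⁆ ≠ 0)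
    (hrad : ∀ x : L, (∀ m, γ ⁅x, m⁆ = 0) → ∃ k : F, ∀ m : L, ⁅x, m⁆ = k • ⁅v, m⁆)
    (hspan : ∀ m : L, ∃ k1 k2 k3 k4 k5 : F, ∃ y : L, (∀ x : L, ⁅x, y⁆ = 0) ∧
        m = k1 • v + k2 • q + k3 • c + k4 • d + k5 • u + y) : IsL1 F L := by
  have skew0 : ∀ {x y : L}, ⁅x, y⁆ = 0 → ⁅y, x⁆ = 0 := by
    intro x y hxy; rw [← lie_skew, hxy, neg_zero]
  have hbu : ∀ m : L, ⁅u, m⁆ = γ ⁅u, m⁆ • w := fun m => by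
    conv_lhs => rw [h.br u m, hu]
    simp
  have hbv : ∀ m : L, ⁅v, m⁆ = α ⁅v, m⁆ • z := fun m => by
    conv_lhs => rw [h.br v m, hv]
    simp
  have huv : ⁅u, v⁆ = 0 := aux_zero h (hu v) (by rw [aux_skew, hv, neg_zero])
  obtain ⟨p, hp⟩ : ∃ p, p = (γ ⁅u, c⁆)⁻¹ • c := ⟨_, rfl⟩
  have hcp : c = γ ⁅u, c⁆ • p := by rw [hp, smul_smul, mul_inv_cancel₀ huc, one_smul]
  have hup : ⁅u, p⁆ = w := by
    rw [hp, lie_smul]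
    conv_lhs => rw [hbu c]
    simp [h.gw, smul_smul, huc]
  have hvp : ⁅v, p⁆ = 0 := by rw [hp, lie_smul, hbv, hvc]; simp
  have hdp : α ⁅d, p⁆ ≠ 0 := by
    rw [hp, lie_smul, map_smul, aux_skew α c d, smul_eq_mul]
    exact mul_ne_zero (inv_ne_zero huc) (neg_ne_zero.2 hcd)
  obtain ⟨q', hq'⟩ : ∃ q', q' = q - γ ⁅u, q⁆ • p := ⟨_, rfl⟩
  have hqq : q = q' + γ ⁅u, q⁆ • p := by rw [hq']; abel
  have huq : ⁅u, q'⁆ = 0 := by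
    rw [hq', lie_sub, lie_smul, hup, hbu q]; simp [h.gw]
  have hvq' : ⁅v, q'⁆ = z := by
    rw [hq', lie_sub, lie_smul, hvp, hbv q, hvq]; simp
  obtain ⟨x0, hx0⟩ : ∃ x0, x0 = d - γ ⁅u, d⁆ • p := ⟨_, rfl⟩
  have hux0 : ⁅u, x0⁆ = 0 := by rw [hx0, lie_sub, lie_smul, hup, hbu d]; simp [h.gw]
  have hvx0 : ⁅v, x0⁆ = 0 := by rw [hx0, lie_sub, lie_smul, hvp, hbv d, hvd]; simp
  have hx0p : α ⁅x0, p⁆ ≠ 0 := by rw [hx0]; simpa using hdp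
  obtain ⟨x, hx⟩ : ∃ x, x = x0 - γ ⁅x0, p⁆ • u - α ⁅x0, q'⁆ • v := ⟨_, rfl⟩
  have hux : ⁅u, x⁆ = 0 := by simp [hx, hux0, huv]
  have hvx : ⁅v, x⁆ = 0 := by simp [hx, hvx0, skew0 huv]
  have hdx : d = x + γ ⁅x0, p⁆ • u + α ⁅x0, q'⁆ • v + γ ⁅u, d⁆ • p := by
    rw [hx, hx0]; abel
  have hxp : ⁅x, p⁆ = α ⁅x0, p⁆ • z := by
    rw [hx, sub_lie, sub_lie, smul_lie, smul_lie, hup, hvp]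
    conv_lhs => rw [h.br x0 p]
    simp [h.gw, h.gz]
  have hxq : ⁅x, q'⁆ = γ ⁅x0, q'⁆ • w := by
    rw [hx, sub_lie, sub_lie, smul_lie, smul_lie, huq, hvq']
    conv_lhs => rw [h.br x0 q']
    simp [h.aw, h.az]
  obtain ⟨a, ha⟩ : ∃ a, a = α ⁅x0, p⁆ := ⟨_, rfl⟩
  obtain ⟨b, hb⟩ : ∃ b, b = γ ⁅x0, q'⁆ := ⟨_, rfl⟩
  rw [← ha] at hx0p hxp
  rw [← hb] at hxq
  have hb0 : b ≠ 0 := by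
    intro hb0
    rw [hb0, zero_smul] at hxq
    have hγp : γ ⁅x, p⁆ = 0 := by rw [hxp, map_smul, h.gz, smul_zero]
    obtain ⟨k, hk⟩ := hrad x (by
      intro m
      obtain ⟨k1, k2, k3, k4, k5, y, hy, hm⟩ := hspan m
      rw [hm, hcp, hdx, hqq]
      simp only [lie_add, lie_smul, map_add, map_smul, hy, skew0 hux, skew0 hvx, hxq, hγp, lie_self,
        smul_zero, add_zero, map_zero])
    have := congrArg α (hk p)
    rw [hvp, hxp, map_smul, h.az] at this
    simp at this
    exact hx0p this
  obtain ⟨e1, he1⟩ : ∃ e, e = α ⁅p, q'⁆ := ⟨_, rfl⟩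
  obtain ⟨e2, he2⟩ : ∃ e, e = γ ⁅p, q'⁆ := ⟨_, rfl⟩
  have hpq : ⁅p, q'⁆ = e1 • z + e2 • w := by rw [he1, he2]; exact h.br _ _
  have hpu : ⁅p, u⁆ = -w := by rw [← hup, lie_skew]
  have hqv' : ⁅q', v⁆ = -z := by rw [← hvq', lie_skew]
  have hpx : ⁅p, x⁆ = -(a • z) := by rw [← hxp, lie_skew]
  refine aux_mkL1 h.dim (p - e1 • v) x (q' + e2 • u) (a • v) (-b • u) (-a • z) (b • w)
    ?_ ?_ ?_ ?_ ?_ ?_ ?_ ?_ ?_ ?_ ?_ ?_ ?_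
  · simp [hpx, hvx]
  · simp [hqv', huv]
  · simp [hpu, skew0 huv]
  · simp [hxq, skew0 hux]
  · simp [hpq, hpu, hvq', skew0 huv]
  · simp [skew0 hvp]
  · simp [skew0 hvx]
  · simp [skew0 hux]
  · simp [skew0 huq]
  · simp [skew0 huv]
  · intro m; simp [h.cz]
  · intro m; simp [h.cw]
  · intro s t hst
    rw [smul_smul] at hst
    have := aux_ind h (-a • z) (by simp [h.az, hx0p]) s (t * b) (by rw [← hst, smul_smul, smul_smul])
    exact ⟨this.1, by simpa [hb0] using this.2⟩

theorem aux_main {α γ : L →ₗ[F] F} {z w : L} (h : AuxCoord α γ z w) : IsL1 F L ∨ IsL2 F L := by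
  by_cases h2 : IsL2 F L
  · exact Or.inr h2
  left
  have hnα : ∀ p q, ¬ AuxHB α p q := fun p q hB => h2 (aux_caseB h p q hB)
  have hnγ : ∀ p q, ¬ AuxHB γ p q := fun p q hB => h2 (aux_caseB h.swap p q hB)
  obtain ⟨v, hvZ, hv, hrad⟩ := aux_rad h.swap hnγ
  obtain ⟨q, hvq⟩ : ∃ q, α ⁅v, q⁆ = 1 := by
    by_contra hcon
    apply hvZ
    rw [aux_mem]
    intro y
    apply aux_zero h _ (hv y)
    by_contra hy
    exact hcon ⟨(α ⁅v, y⁆)⁻¹ • y, by rw [lie_smul, map_smul, smul_eq_mul, inv_mul_cancel₀ hy]⟩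
  obtain ⟨c, d, u, hcd, hvc, hvd, hqc, hqd, huZ, hu, hspan⟩ := aux_sympl h hnα v q hvq
  by_cases huc : γ ⁅u, c⁆ = 0
  · by_cases hud : γ ⁅u, d⁆ = 0
    · exfalso
      have huv : γ ⁅u, v⁆ = 0 := by rw [aux_skew, hv, neg_zero]
      have huq : γ ⁅u, q⁆ ≠ 0 := by
        intro huq
        apply huZ
        rw [aux_mem]
        intro m
        apply aux_zero h (hu m)
        obtain ⟨k, y, hy, hm⟩ := hspan m
        rw [hm]
        simp only [lie_add, lie_smul, map_add, map_smul, hy, huc, hud, huv, huq, lie_self,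
          smul_zero, add_zero, map_zero]
      obtain ⟨δ, hδ⟩ : ∃ δ, δ = γ ⁅c, d⁆ := ⟨_, rfl⟩
      have hφ : AuxCoord (γ - δ • α) α w (z + δ • w) := by
        refine ⟨h.dim, h.dimZ, ?_, ?_, ?_, ?_, ?_, ?_, ?_, ?_, ?_⟩
        · simp [h.aw, h.gw]
        · simp [h.aw, h.gw, h.az, h.gz]
        · exact h.aw
        · simp [h.aw, h.az]
        · intro x y
          conv_lhs => rw [h.br x y]
          simp only [LinearMap.sub_apply, LinearMap.smul_apply, smul_eq_mul]
          module
        · exact h.cw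
        · intro x; simp [h.cz, h.cw]
        · exact ⟨u, q, by simpa [hu] using huq⟩
        · exact h.na
      refine h2 (aux_caseB hφ u ((γ ⁅u, q⁆)⁻¹ • q) ⟨by simp [hu, huq], ?_⟩)
      intro r s hr _ hs _
      have hK : ∀ r, (γ - δ • α) ⁅u, r⁆ = 0 → ∃ k1 k2 k3 k4 : F, ∃ y : L, (∀ x : L, ⁅x, y⁆ = 0) ∧
          r = k1 • v + k2 • c + k3 • d + k4 • u + y := by
        intro r hr
        obtain ⟨k, y, hy, hm⟩ := hspan r
        have : α ⁅v, r⁆ = 0 := by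
          rw [hm] at hr
          simp only [LinearMap.sub_apply, LinearMap.smul_apply, hu, smul_zero, sub_zero] at hr
          simp only [lie_add, lie_smul, map_add, map_smul, hy, huc, hud, huv, lie_self,
            smul_zero, add_zero, map_zero, zero_add, smul_eq_mul, mul_zero] at hr
          rcases mul_eq_zero.1 hr with h' | h'
          · exact h'
          · exact absurd h' huq
        rw [this, zero_smul, add_zero] at hm
        exact ⟨_, _, _, _, y, hy, hm⟩
      obtain ⟨k1, k2, k3, k4, y, hy, rfl⟩ := hK r hr
      obtain ⟨l1, l2, l3, l4, y', hy', rfl⟩ := hK s hs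
      have hy0 : ∀ x : L, ⁅y, x⁆ = 0 := fun x => by rw [← lie_skew, hy, neg_zero]
      have a1 : α ⁅d, c⁆ = -1 := by rw [aux_skew, hcd]
      have a2 : γ ⁅d, c⁆ = -δ := by rw [aux_skew, hδ]
      have a3 : α ⁅c, v⁆ = 0 := by rw [aux_skew, hvc, neg_zero]
      have a4 : α ⁅d, v⁆ = 0 := by rw [aux_skew, hvd, neg_zero]
      have a5 : ∀ m, α ⁅m, u⁆ = 0 := fun m => by rw [aux_skew, hu, neg_zero]
      have a6 : ∀ m, γ ⁅m, v⁆ = 0 := fun m => by rw [aux_skew, hv, neg_zero]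
      have a7 : γ ⁅c, u⁆ = 0 := by rw [aux_skew, huc, neg_zero]
      have a8 : γ ⁅d, u⁆ = 0 := by rw [aux_skew, hud, neg_zero]
      simp only [LinearMap.sub_apply, LinearMap.smul_apply, lie_add, add_lie, lie_smul, smul_lie,
        map_add, map_smul, hy, hy', hy0, huc, hud, hu, hv, hvc, hvd, hcd, ← hδ, a1, a2, a3, a4, a5, a6, a7, a8,
        lie_self, smul_eq_mul, map_zero]
      ring
    · exact aux_finA h u v q d c hu hv hvq hvd hvc hud
        (by rw [aux_skew, hcd]; simp) hrad
        (fun m => by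
          obtain ⟨k, y, hy, hm⟩ := hspan m
          exact ⟨_, _, _, _, _, y, hy, hm.trans (by rw [add_right_comm (_ + _) _ (α ⁅c, m⁆ • d)])⟩)
  · exact aux_finA h u v q c d hu hv hvq hvc hvd huc
        (by rw [hcd]; simp) hrad
        (fun m => by
          obtain ⟨k, y, hy, hm⟩ := hspan m
          exact ⟨_, _, _, _, _, y, hy, hm⟩)

end helpers

/-- A 7-dimensional generalized Heisenberg Lie algebra of rank 2 over a field of
characteristic 2 is isomorphic to `L₁` or `L₂`. -/
theorem gen_heisenberg_rank_two_dim_seven_char_two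
    (F L : Type u) [Field F] [LieRing L] [LieAlgebra F L] [FiniteDimensional F L]
    (hchar : ringChar F = 2)
    (hdim : finrank F L = 7)
    (hgh : LieModule.lowerCentralSeries F L L 1 = LieAlgebra.center F L)
    (hder : finrank F ↥(LieModule.lowerCentralSeries F L L 1) = 2) :
    IsL1 F L ∨ IsL2 F L := by
  have hZ : finrank F (LieAlgebra.center F L).toSubmodule = 2 := by
    rw [← hgh]; exact hder
  have hmem : ∀ x y : L, ⁅x, y⁆ ∈ (LieAlgebra.center F L).toSubmodule := by
    intro x y
    rw [← hgh, LieSubmodule.mem_toSubmodule, LieModule.lowerCentralSeries_succ,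
      LieModule.lowerCentralSeries_zero]
    exact LieSubmodule.lie_mem_lie (LieSubmodule.mem_top x) (LieSubmodule.mem_top y)
  have hspan : ∀ φ : L →ₗ[F] F, (∀ x y : L, φ ⁅x, y⁆ = 0) →
      ∀ z ∈ (LieAlgebra.center F L).toSubmodule, φ z = 0 := by
    intro φ hφ z hz
    rw [← hgh, LieModule.lowerCentralSeries_succ,
      LieModule.lowerCentralSeries_zero, LieSubmodule.lieIdeal_oper_eq_linear_span'] at hz
    have : Submodule.span F {m | ∃ x ∈ (⊤ : LieIdeal F L), ∃ n ∈ (⊤ : LieSubmodule F L L), ⁅x, n⁆ = m}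
        ≤ φ.ker := by
      rw [Submodule.span_le]
      rintro _ ⟨x, -, n, -, rfl⟩
      exact hφ x n
    exact this hz
  let b := finBasisOfFinrankEq F (LieAlgebra.center F L).toSubmodule hZ
  obtain ⟨α, hα⟩ := LinearMap.exists_extend (b.coord 0)
  obtain ⟨γ, hγ⟩ := LinearMap.exists_extend (b.coord 1)
  have hα' : ∀ y : (LieAlgebra.center F L).toSubmodule, α y = b.repr y 0 := fun y => by
    have := LinearMap.congr_fun hα y
    simpa using this
  have hγ' : ∀ y : (LieAlgebra.center F L).toSubmodule, γ y = b.repr y 1 := fun y => by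
    have := LinearMap.congr_fun hγ y
    simpa using this
  have hc : ∀ y : (LieAlgebra.center F L).toSubmodule, ∀ x : L, ⁅x, (y : L)⁆ = 0 := fun y x => by
    rw [← lie_skew, (aux_mem (y : L)).1 y.2, neg_zero]
  have az : α (b 0) = 1 := by rw [hα']; simp
  have gw : γ (b 1) = 1 := by rw [hγ']; simp
  refine aux_main (α := α) (γ := γ) (z := b 0) (w := b 1)
    ⟨hdim, hZ, az, ?_, ?_, gw, ?_, hc _, hc _, ?_, ?_⟩
  · rw [hα']; simp
  · rw [hγ']; simp
  · intro x y
    have h1 := hα' ⟨_, hmem x y⟩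
    have h2 := hγ' ⟨_, hmem x y⟩
    have h3 := congrArg Subtype.val (b.sum_repr ⟨_, hmem x y⟩)
    rw [Fin.sum_univ_two, ← h1, ← h2] at h3
    exact h3.symm
  · by_contra hcon
    push Not at hcon
    have := hspan α hcon (b 0) (b 0).2
    rw [az] at this
    exact one_ne_zero this
  · by_contra hcon
    push Not at hcon
    have := hspan γ hcon (b 1) (b 1).2
    rw [gw] at this
    exact one_ne_zero this
end

section
/- Let L be a 7-dimensional Lie algebra over an arbitrary field F which is a generalized Heisenberg Lie algebra of rank 2, i.e. [L,L] = Z(L) and dim [L,L] = 2. Then L is isomorphic to L₁ or to L₂. -/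
open Module

universe u

namespace GH
variable {F : Type u} [Field F]

lemma even_of_nondeg (n : ℕ) : ∀ (V : Type u) [AddCommGroup V] [Module F V] [FiniteDimensional F V]
    (A : V →ₗ[F] V →ₗ[F] F), (∀ x, A x x = 0) → (∀ x, A x = 0 → x = 0) → finrank F V = n → Even n := by
  induction n using Nat.strong_induction_on with
  | _ n ih =>
  intro V _ _ _ A hA hk hn
  by_cases h0 : n = 0
  · simp [h0]
  have : Nontrivial V := Module.nontrivial_of_finrank_pos (R := F) (by omega)
  obtain ⟨p, hp⟩ := exists_ne (0 : V)
  have hsk : ∀ x y, A x y = - A y x := fun x y => (LinearMap.IsAlt.neg (B := A) hA y x).symm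
  obtain ⟨q, hq⟩ : ∃ q, A p q = 1 := by
    have : A p ≠ 0 := fun h => hp (hk p h)
    obtain ⟨v, hv⟩ := DFunLike.ne_iff.mp this
    exact ⟨(A p v)⁻¹ • v, by simp at hv ⊢; field_simp⟩
  have hq' : A q p = -1 := by rw [hsk, hq]
  let f : V →ₗ[F] F × F := (A p).prod (A q)
  have hf : Function.Surjective f := by
    rintro ⟨a, b⟩
    exact ⟨a • q - b • p, by simp [f, hq, hq', hA]⟩
  have hr := LinearMap.finrank_range_add_finrank_ker f
  rw [LinearMap.range_eq_top.mpr hf] at hr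
  simp only [finrank_top, finrank_prod, finrank_self] at hr
  have := ih (n - 2) (by omega) (LinearMap.ker f) (A.domRestrict₁₂ _ _) (fun x => hA x) ?_ (by omega)
  · obtain ⟨k, hk⟩ := this
    exact ⟨k + 1, by omega⟩
  · intro x hx
    have hx2 : A p x = 0 ∧ A q x = 0 := by simpa [f] using x.2
    have : (x : V) = 0 := by
      apply hk
      ext v
      have hm : v - A p v • q + A q v • p ∈ LinearMap.ker f := by
        simp [f, hq, hq', hA]
      have : A x (v - A p v • q + A q v • p) = 0 := LinearMap.congr_fun hx ⟨_, hm⟩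
      simp [hsk x p, hsk x q, hx2] at this
      simpa using this
    exact Subtype.ext this

variable {V : Type u} [AddCommGroup V] [Module F V] [FiniteDimensional F V]

lemma even_corank (A : V →ₗ[F] V →ₗ[F] F) (hA : ∀ x, A x x = 0) :
    ∃ k, finrank F (LinearMap.ker A) + 2 * k = finrank F V := by
  obtain ⟨C, hC⟩ := Submodule.exists_isCompl (LinearMap.ker A)
  have h := Submodule.finrank_add_eq_of_isCompl hC
  have hsk : ∀ x y, A x y = - A y x := fun x y => (LinearMap.IsAlt.neg (B := A) hA y x).symm
  obtain ⟨k, hk⟩ := even_of_nondeg _ C (A.domRestrict₁₂ _ _) (fun x => hA x) (by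
    intro x hx
    have hxk : (x : V) ∈ LinearMap.ker A := by
      rw [LinearMap.mem_ker]
      ext v
      obtain ⟨a, ha, b, hb, rfl⟩ := Submodule.mem_sup.mp (hC.sup_eq_top ▸ Submodule.mem_top (x := v))
      have : A x b = 0 := LinearMap.congr_fun hx ⟨b, hb⟩
      rw [LinearMap.mem_ker] at ha
      simp [this, hsk x a, ha]
    have := (Submodule.disjoint_def.mp hC.disjoint) x hxk x.2
    exact Subtype.ext this) rfl
  exact ⟨k, by omega⟩

lemma iso_bound (A : V →ₗ[F] V →ₗ[F] F) (H : Submodule F V) (hH : ∀ x ∈ H, ∀ y ∈ H, A x y = 0) :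
    2 * finrank F H ≤ finrank F (H ⊓ LinearMap.ker A : Submodule F V) + finrank F V := by
  obtain ⟨C, hC⟩ := Submodule.exists_isCompl H
  have h := Submodule.finrank_add_eq_of_isCompl hC
  let g : H →ₗ[F] (C →ₗ[F] F) := A.domRestrict₁₂ H C
  have h1 := LinearMap.finrank_range_add_finrank_ker g
  have h2 : finrank F (LinearMap.range g) ≤ finrank F C := by
    refine (Submodule.finrank_le _).trans (le_of_eq ?_)
    exact Subspace.dual_finrank_eq
  have h3 : finrank F (LinearMap.ker g) ≤ finrank F (H ⊓ LinearMap.ker A : Submodule F V) := by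
    rw [← Submodule.finrank_map_subtype_eq]
    apply Submodule.finrank_mono
    rintro _ ⟨x, hx, rfl⟩
    refine ⟨x.2, ?_⟩
    change A x = 0
    ext v
    obtain ⟨a, ha, b, hb, rfl⟩ := Submodule.mem_sup.mp (hC.sup_eq_top ▸ Submodule.mem_top (x := v))
    have : A x b = 0 := LinearMap.congr_fun (LinearMap.mem_ker.mp hx) ⟨b, hb⟩
    simp [this, hH x x.2 a ha]
  omega

lemma caseI (A B : V →ₗ[F] V →ₗ[F] F) (hA : ∀ x, A x x = 0) (hB : ∀ x, B x x = 0)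
    (hk : ∀ x, A x = 0 → B x = 0 → x = 0) (hV : finrank F V = 5)
    (hK : finrank F (LinearMap.ker A) = 3) :
    ∃ e1 e2 e3 e4 e5 : V,
      A e1 e2 = 1 ∧ A e1 e3 = 0 ∧ A e1 e4 = 0 ∧ A e1 e5 = 0 ∧ A e2 e3 = 0 ∧ A e2 e4 = 0 ∧
      A e2 e5 = 0 ∧ A e3 e4 = 0 ∧ A e3 e5 = 0 ∧ A e4 e5 = 0 ∧
      B e1 e2 = 0 ∧ B e1 e3 = 0 ∧ B e1 e4 = 1 ∧ B e1 e5 = 0 ∧ B e2 e3 = 0 ∧ B e2 e4 = 0 ∧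
      B e2 e5 = 0 ∧ B e3 e4 = 0 ∧ B e3 e5 = 1 ∧ B e4 e5 = 0 := by
  have skA : ∀ x y, A x y = - A y x := fun x y => (LinearMap.IsAlt.neg (B := A) hA y x).symm
  have skB : ∀ x y, B x y = - B y x := fun x y => (LinearMap.IsAlt.neg (B := B) hB y x).symm
  set K := LinearMap.ker A with hKdef
  have kl : ∀ x ∈ K, ∀ y, A x y = 0 := fun x hx y => by rw [LinearMap.mem_ker.mp hx]; rfl
  have kr : ∀ x ∈ K, ∀ y, A y x = 0 := fun x hx y => by rw [skA, kl x hx, neg_zero]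
  obtain ⟨e3, h3, e5, h5, h35⟩ : ∃ x ∈ K, ∃ y ∈ K, B x y = 1 := by
    have : ∃ x ∈ K, ∃ y ∈ K, B x y ≠ 0 := by
      by_contra! hc
      have := iso_bound B K hc
      have h1 : K ⊓ LinearMap.ker B = ⊥ := by
        rw [eq_bot_iff]
        rintro x ⟨hx, hy⟩
        exact hk x hx hy
      rw [h1, finrank_bot] at this
      omega
    obtain ⟨x, hx, y, hy, hxy⟩ := this
    exact ⟨x, hx, (B x y)⁻¹ • y, K.smul_mem _ hy, by simp; field_simp⟩
  have h53 : B e5 e3 = -1 := by rw [skB, h35]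
  obtain ⟨w, hw, hw0, hw3, hw5⟩ : ∃ w ∈ K, w ≠ 0 ∧ B e3 w = 0 ∧ B e5 w = 0 := by
    let f : K →ₗ[F] F × F := ((B e3).prod (B e5)).comp K.subtype
    have := LinearMap.ker_ne_bot_of_finrank_lt (f := f) (by simp [hK])
    obtain ⟨w, hw, hw0⟩ := Submodule.exists_mem_ne_zero_of_ne_bot this
    have hw2 : B e3 w = 0 ∧ B e5 w = 0 := by simpa [f] using hw
    exact ⟨w, w.2, by simpa using hw0, hw2⟩
  obtain ⟨x, hx⟩ : ∃ x, B x w = 1 := by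
    have : B w ≠ 0 := fun h => hw0 (hk w hw h)
    obtain ⟨v, hv⟩ := DFunLike.ne_iff.mp this
    exact ⟨-(B w v)⁻¹ • v, by simp at hv ⊢; rw [skB v w]; field_simp⟩
  obtain ⟨e1, h14, h13, h15⟩ : ∃ x, B x w = 1 ∧ B x e3 = 0 ∧ B x e5 = 0 := by
    refine ⟨x + B x e3 • e5 - B x e5 • e3, ?_, ?_, ?_⟩ <;> simp [h35, h53, hB, hx, hw3, hw5]
  have h1K : e1 ∉ K := by
    intro h1
    have hli : LinearIndependent F ![(⟨e1, h1⟩ : K), ⟨w, hw⟩, ⟨e3, h3⟩, ⟨e5, h5⟩] := by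
      rw [Fintype.linearIndependent_iff]
      intro g hg
      simp [Fin.sum_univ_four] at hg
      have t1 := congrArg (fun v => B v w) hg
      have t2 := congrArg (fun v => B e1 v) hg
      have t3 := congrArg (fun v => B v e5) hg
      have t4 := congrArg (fun v => B e3 v) hg
      simp [hB, h14, h13, h15, hw3, hw5, h35, skB w e5, skB e3 e1] at t1 t2 t3 t4
      intro i; fin_cases i <;> simp [*]
    have := hli.fintype_card_le_finrank
    simp [hK] at this
  obtain ⟨y, hy⟩ : ∃ y, A e1 y = 1 := by
    have : A e1 ≠ 0 := fun h => h1K h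
    obtain ⟨v, hv⟩ := DFunLike.ne_iff.mp this
    exact ⟨(A e1 v)⁻¹ • v, by simp at hv ⊢; field_simp⟩
  have hw1 : B w e1 = -1 := by rw [skB, h14]
  obtain ⟨y2, a1, a2⟩ : ∃ y, A e1 y = 1 ∧ B y w = 0 :=
    ⟨y - B y w • e1, by simp [hy, hA], by simp [h14]⟩
  obtain ⟨y3, a1, a2, a3, a4⟩ : ∃ y, A e1 y = 1 ∧ B y w = 0 ∧ B y e3 = 0 ∧ B y e5 = 0 := by
    refine ⟨y2 + B y2 e3 • e5 - B y2 e5 • e3, ?_, ?_, ?_, ?_⟩ <;>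
    simp [h35, h53, hB, hw3, hw5, a1, a2, kr _ h3, kr _ h5]
  obtain ⟨e2, a1, a2, a3, a4, a5⟩ : ∃ y, A e1 y = 1 ∧ B y w = 0 ∧ B y e3 = 0 ∧ B y e5 = 0 ∧
      B e1 y = 0 := by
    refine ⟨y3 - B e1 y3 • w, ?_, ?_, ?_, ?_, ?_⟩ <;>
    simp [hB, hw3, hw5, a1, a2, a3, a4, kr _ hw, h14, skB w e3, skB w e5]
  refine ⟨e1, e2, e3, w, e5, ?_⟩
  simp [a1, a2, a3, a4, a5, h13, h14, h15, h35, hw3, kr _ h3, kr _ hw, kr _ h5, skB w e5, hw5]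

set_option maxHeartbeats 2000000 in
lemma caseII (A B : V →ₗ[F] V →ₗ[F] F) (hA : ∀ x, A x x = 0) (hB : ∀ x, B x x = 0)
    (hk : ∀ x, A x = 0 → B x = 0 → x = 0) (hV : finrank F V = 5)
    (hK : ∀ a b : F, (a ≠ 0 ∨ b ≠ 0) → finrank F (LinearMap.ker (a • A + b • B)) = 1) :
    ∃ e1 e2 e3 e4 e5 : V,
      A e1 e2 = 1 ∧ A e1 e3 = 0 ∧ A e1 e4 = 0 ∧ A e1 e5 = 0 ∧ A e2 e3 = 0 ∧ A e2 e4 = 0 ∧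
      A e2 e5 = 0 ∧ A e3 e4 = 1 ∧ A e3 e5 = 0 ∧ A e4 e5 = 0 ∧
      B e1 e2 = 0 ∧ B e1 e3 = 0 ∧ B e1 e4 = 0 ∧ B e1 e5 = 1 ∧ B e2 e3 = 1 ∧ B e2 e4 = 0 ∧
      B e2 e5 = 0 ∧ B e3 e4 = 0 ∧ B e3 e5 = 0 ∧ B e4 e5 = 0 := by
  have skA : ∀ x y, A x y = - A y x := fun x y => (LinearMap.IsAlt.neg (B := A) hA y x).symm
  have skB : ∀ x y, B x y = - B y x := fun x y => (LinearMap.IsAlt.neg (B := B) hB y x).symm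
  have hKA : finrank F (LinearMap.ker A) = 1 := by
    have h := hK 1 0 (by simp)
    rwa [one_smul, zero_smul, add_zero] at h
  have hKB : finrank F (LinearMap.ker B) = 1 := by
    have h := hK 0 1 (by simp)
    rwa [one_smul, zero_smul, zero_add] at h
  -- no nonzero member of the pencil has a four-dimensional isotropic subspace
  have noiso : ∀ a b : F, (a ≠ 0 ∨ b ≠ 0) → ∀ H : Submodule F V, 4 ≤ finrank F H →
      ¬ ∀ x ∈ H, ∀ y ∈ H, a * A x y + b * B x y = 0 := by
    intro a b hab H hH hz
    have h1 := iso_bound (a • A + b • B) H (by simpa using hz)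
    have h2 := Submodule.finrank_mono (inf_le_right : H ⊓ LinearMap.ker (a • A + b • B) ≤ _)
    rw [hK a b hab] at h2
    omega
  obtain ⟨u, hu, hu0⟩ := Submodule.exists_mem_ne_zero_of_ne_bot
    (p := LinearMap.ker A) (by intro h; rw [h, finrank_bot] at hKA; omega)
  obtain ⟨w, hw, hw0⟩ := Submodule.exists_mem_ne_zero_of_ne_bot
    (p := LinearMap.ker B) (by intro h; rw [h, finrank_bot] at hKB; omega)
  rw [LinearMap.mem_ker] at hu hw
  have uA : ∀ x, A u x = 0 := by simp [hu]
  have wB : ∀ x, B w x = 0 := by simp [hw]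
  have uA' : ∀ x, A x u = 0 := fun x => by rw [skA, uA, neg_zero]
  have wB' : ∀ x, B x w = 0 := fun x => by rw [skB, wB, neg_zero]
  have hBu : B u ≠ 0 := fun h => hu0 (hk u hu h)
  have hAw : A w ≠ 0 := fun h => hw0 (hk w h hw)
  have huw : ∀ a b : F, a • u + b • w = 0 → a = 0 ∧ b = 0 := by
    intro a b h
    have t1 := congrArg A h
    have t2 := congrArg B h
    simp [hu, hw] at t1 t2
    exact ⟨t2.resolve_right hBu, t1.resolve_right hAw⟩
  have hind : ∀ s t : F, s • A w + t • B u = 0 → s = 0 ∧ t = 0 := by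
    intro s t h
    by_contra hst
    have hs : s ≠ 0 := by
      rintro rfl
      simp [hBu] at h
      exact hst ⟨rfl, h⟩
    have hker : ∀ x, B u x = 0 → A w x = 0 := by
      intro x hx
      have := LinearMap.congr_fun h x
      simpa [hx, hs] using this
    have ht : t ≠ 0 := by
      rintro rfl
      simp [hs, hAw] at h
    by_cases hz : ∀ x ∈ LinearMap.ker (B u), ∀ y ∈ LinearMap.ker (B u), A x y = 0 ∧ B x y = 0
    · refine noiso 1 0 (by simp) (LinearMap.ker (B u)) ?_ (fun x hx y hy => by simp [hz x hx y hy])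
      have h1 := LinearMap.finrank_range_add_finrank_ker (B u)
      have h2 := Submodule.finrank_le (LinearMap.range (B u))
      simp at h2
      omega
    · push Not at hz
      obtain ⟨x, hx, y, hy, hxy⟩ := hz
      rw [LinearMap.mem_ker] at hx hy
      have hx' := hker x hx
      have hy' := hker y hy
      have hli : LinearIndependent F ![u, w, x, y] := by
        rw [Fintype.linearIndependent_iff]
        intro g hg
        simp [Fin.sum_univ_four] at hg
        have t1 := congrArg (fun v => A v y) hg
        have t2 := congrArg (fun v => B v y) hg
        have t3 := congrArg (fun v => A x v) hg
        have t4 := congrArg (fun v => B x v) hg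
        simp [hA, hB, uA, wB, uA', wB', hx, hy, hx', hy', skA x w, skB x u] at t1 t2 t3 t4
        have g2 : g 2 = 0 := by
          by_contra h2
          exact hxy (t1.resolve_left h2) (t2.resolve_left h2)
        have g3 : g 3 = 0 := by
          by_contra h2
          exact hxy (t3.resolve_left h2) (t4.resolve_left h2)
        simp [g2, g3] at hg
        obtain ⟨g0, g1⟩ := huw _ _ hg
        intro i; fin_cases i <;> simp [*]
      have hne : B x y ≠ 0 ∨ -A x y ≠ 0 := by
        by_contra! hc
        exact hxy (by simpa using hc.2) hc.1
      refine noiso _ _ hne (Submodule.span F (Set.range ![u, w, x, y])) ?_ ?_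
      · rw [finrank_span_eq_card hli]; simp
      · have key : ∀ a ∈ Set.range ![u, w, x, y], ∀ b ∈ Set.range ![u, w, x, y],
            B x y * A a b + -A x y * B a b = 0 := by
          rintro _ ⟨i, rfl⟩ _ ⟨j, rfl⟩
          fin_cases i <;> fin_cases j <;>
          simp [hA, hB, uA, wB, uA', wB', hx, hy, hx', hy', skA x w, skB x u, skA y w, skB y u,
            skA y x, skB y x] <;> ring
        intro a ha b hb
        induction ha, hb using Submodule.span_induction₂ with
        | mem_mem a b ha hb => exact key a ha b hb
        | zero_left => simp
        | zero_right => simp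
        | add_left a b c _ _ _ h1 h2 => simp; linear_combination h1 + h2
        | add_right a b c _ _ _ h1 h2 => simp; linear_combination h1 + h2
        | smul_left r a b _ _ h1 => simp; linear_combination r * h1
        | smul_right r a b _ _ h1 => simp; linear_combination r * h1
  -- the common kernel of the two functionals
  let f : V →ₗ[F] F × F := (A w).prod (B u)
  have hf : Function.Surjective f := by
    rw [← LinearMap.range_eq_top]
    by_contra hne
    obtain ⟨φ, hφ, hφ2⟩ := Submodule.exists_le_ker_of_lt_top _ (lt_top_iff_ne_top.mpr hne)
    have h0 : ∀ s t : F, φ (s, t) = s * φ (1, 0) + t * φ (0, 1) := by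
      intro s t
      have : ((s, t) : F × F) = s • (1, 0) + t • (0, 1) := by simp
      rw [this, map_add, map_smul, map_smul]; simp
    have := hind (φ (1, 0)) (φ (0, 1)) (by
      ext x
      have : φ (f x) = 0 := hφ2 ⟨x, rfl⟩
      have h2 := h0 (A w x) (B u x)
      have h3 : f x = (A w x, B u x) := rfl
      rw [h3, h2] at this
      simp
      linear_combination this)
    apply hφ
    apply LinearMap.ext
    rintro ⟨s, t⟩
    rw [h0, this.1, this.2]; simp
  obtain ⟨e1, he1⟩ := hf (0, 1)
  obtain ⟨e3, he3⟩ := hf (1, 0)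
  simp [f] at he1 he3
  obtain ⟨a1, b1⟩ := he1
  obtain ⟨a3, b3⟩ := he3
  obtain ⟨y, ya, yb, hy⟩ : ∃ y, A w y = 0 ∧ B u y = 0 ∧ ∀ a b : F, y ≠ a • u + b • w := by
    by_contra! hc
    have hr := LinearMap.finrank_range_add_finrank_ker f
    rw [LinearMap.range_eq_top.mpr hf] at hr
    simp only [finrank_top, finrank_prod, finrank_self] at hr
    have hle : LinearMap.ker f ≤ Submodule.span F (Set.range ![u, w]) := by
      intro x hx
      have hx2 : A w x = 0 ∧ B u x = 0 := by simpa [f] using hx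
      obtain ⟨a, b, rfl⟩ := hc x hx2.1 hx2.2
      exact add_mem (Submodule.smul_mem _ _ (Submodule.subset_span ⟨0, rfl⟩))
        (Submodule.smul_mem _ _ (Submodule.subset_span ⟨1, rfl⟩))
    have h1 := Submodule.finrank_mono hle
    have h2 := finrank_range_le_card (R := F) ![u, w]
    simp [Set.finrank] at h2
    simp at h1
    omega
  have hli : LinearIndependent F ![u, w, y, e1, e3] := by
    rw [Fintype.linearIndependent_iff]
    intro g hg
    simp [Fin.sum_univ_five] at hg
    have t1 := congrArg (A w) hg
    have t2 := congrArg (B u) hg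
    simp [hA, hB, uA', wB', a1, b1, a3, b3, ya, yb] at t1 t2
    simp [t1, t2] at hg
    have g2 : g 2 = 0 := by
      by_contra h2
      apply hy (-(g 2)⁻¹ * g 0) (-(g 2)⁻¹ * g 1)
      have : y = (g 2)⁻¹ • (g 2 • y) := by rw [smul_smul, inv_mul_cancel₀ h2, one_smul]
      rw [this, eq_neg_of_add_eq_zero_right hg]
      module
    simp [g2] at hg
    obtain ⟨g0, g1⟩ := huw _ _ hg
    intro i; fin_cases i <;> simp [*]
  let bs := basisOfLinearIndependentOfCardEqFinrank hli (by simp [hV])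
  have hAy : A y = A y e3 • A w + A y e1 • B u := by
    apply bs.ext
    intro i
    fin_cases i <;> simp [bs, hA, hB, uA', wB', a1, b1, a3, b3, ya, yb, skA y w]
  have hBy : B y = B y e3 • A w + B y e1 • B u := by
    apply bs.ext
    intro i
    fin_cases i <;> simp [bs, hA, hB, uA', wB', a1, b1, a3, b3, ya, yb, skB y u]
  generalize A y e3 = p at hAy
  generalize A y e1 = q at hAy
  generalize B y e3 = r at hBy
  generalize B y e1 = s at hBy
  obtain ⟨z, hz, zA, zB, za, zb⟩ : ∃ z, (∀ a b : F, z ≠ a • u + b • w) ∧ A z = q • B u ∧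
      B z = r • A w ∧ A w z = 0 ∧ B u z = 0 := by
    refine ⟨y - p • w - s • u, ?_, ?_, ?_, ?_, ?_⟩
    · intro a b h
      apply hy (a + s) (b + p)
      rw [sub_sub, sub_eq_iff_eq_add] at h
      rw [h]; module
    · simp [hAy, hu]
    · simp [hBy, hw]
    · simp [ya, hA, uA']
    · simp [yb, hB, wB']
  have hq : q ≠ 0 := by
    rintro rfl
    obtain ⟨c, hc⟩ := (finrank_eq_one_iff_of_nonzero' (⟨u, hu⟩ : LinearMap.ker A) (fun h => hu0 (congrArg Subtype.val h))).mp
      hKA ⟨z, by rw [LinearMap.mem_ker, zA, zero_smul]⟩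
    exact hz c 0 (by simpa using (congrArg Subtype.val hc).symm)
  have hr : r ≠ 0 := by
    rintro rfl
    obtain ⟨c, hc⟩ := (finrank_eq_one_iff_of_nonzero' (⟨w, hw⟩ : LinearMap.ker B) (fun h => hw0 (congrArg Subtype.val h))).mp
      hKB ⟨z, by rw [LinearMap.mem_ker, zB, zero_smul]⟩
    exact hz 0 c (by simpa using (congrArg Subtype.val hc).symm)
  have zA' : ∀ x, A z x = q * B u x := fun x => by rw [zA]; rfl
  have zB' : ∀ x, B z x = r * A w x := fun x => by rw [zB]; rfl
  have zA'' : ∀ x, A x z = - (q * B u x) := fun x => by rw [skA, zA']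
  have zB'' : ∀ x, B x z = - (r * A w x) := fun x => by rw [skB, zB']
  have wA : ∀ x, A x w = - A w x := fun x => skA x w
  have uB : ∀ x, B x u = - B u x := fun x => skB x u
  obtain ⟨E1, c1, c2⟩ : ∃ x, A w x = 0 ∧ B u x = -q⁻¹ := ⟨-q⁻¹ • e1, by simp [a1], by simp [b1]⟩
  obtain ⟨E3, d1, d2⟩ : ∃ x, A w x = r⁻¹ ∧ B u x = 0 := ⟨r⁻¹ • e3, by simp [a3], by simp [b3]⟩
  have wu : B u w = 0 := wB' u
  have wu' : A w u = 0 := uA' w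
  refine ⟨E1 - B E1 E3 • z, z, E3 - A E1 E3 • z, -r • w, q • u, ?_⟩
  simp only [map_sub, map_smul, map_neg, LinearMap.sub_apply, LinearMap.smul_apply, LinearMap.neg_apply, smul_eq_mul,
    zA'', zB'', zA', zB', hA, hB, wu, wu', uA', wB', wB, c1, c2, d1, d2, neg_smul, wA E1, wA E3, uB E1, uB E3]
  simp [hq, hr]
end GH

namespace GH
variable {F : Type u} [Field F]

lemma mkL1 {L : Type u} [LieRing L] [LieAlgebra F L] [FiniteDimensional F L]
    (hdim : finrank F L = 7) (e1 e2 e3 e4 e5 z1 z2 : L)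
    (hz : ∀ a b : F, a • z1 + b • z2 = 0 → a = 0 ∧ b = 0)
    (hz1 : ∀ x : L, ⁅x, z1⁆ = 0) (hz2 : ∀ x : L, ⁅x, z2⁆ = 0)
    (h12 : ⁅e1, e2⁆ = z1) (h13 : ⁅e1, e3⁆ = 0) (h14 : ⁅e1, e4⁆ = 0) (h15 : ⁅e1, e5⁆ = z2) (h23 : ⁅e2, e3⁆ = z2) (h24 : ⁅e2, e4⁆ = 0) (h25 : ⁅e2, e5⁆ = 0) (h34 : ⁅e3, e4⁆ = z1) (h35 : ⁅e3, e5⁆ = 0) (h45 : ⁅e4, e5⁆ = 0) :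
    IsL1 F L := by
  have s12 : ⁅e2, e1⁆ = -(z1) := by rw [← lie_skew, h12]
  have s13 : ⁅e3, e1⁆ = -(0) := by rw [← lie_skew, h13]
  have s14 : ⁅e4, e1⁆ = -(0) := by rw [← lie_skew, h14]
  have s15 : ⁅e5, e1⁆ = -(z2) := by rw [← lie_skew, h15]
  have s23 : ⁅e3, e2⁆ = -(z2) := by rw [← lie_skew, h23]
  have s24 : ⁅e4, e2⁆ = -(0) := by rw [← lie_skew, h24]
  have s25 : ⁅e5, e2⁆ = -(0) := by rw [← lie_skew, h25]
  have s34 : ⁅e4, e3⁆ = -(z1) := by rw [← lie_skew, h34]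
  have s35 : ⁅e5, e3⁆ = -(0) := by rw [← lie_skew, h35]
  have s45 : ⁅e5, e4⁆ = -(0) := by rw [← lie_skew, h45]
  have hli : LinearIndependent F ![e1, e2, e3, e4, e5, z1, z2] := by
    rw [Fintype.linearIndependent_iff]
    intro g hg
    simp [Fin.sum_univ_seven] at hg
    have t1 := congrArg (fun v => ⁅e1, v⁆) hg
    have t2 := congrArg (fun v => ⁅e2, v⁆) hg
    have t3 := congrArg (fun v => ⁅e3, v⁆) hg
    have t4 := congrArg (fun v => ⁅e4, v⁆) hg
    have t5 := congrArg (fun v => ⁅e5, v⁆) hg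
    simp only [lie_add, lie_smul, lie_self, hz1, hz2, h12, h13, h14, h15, h23, h24, h25, h34, h35, h45, s12, s13, s14, s15, s23, s24, s25, s34, s35, s45, smul_zero, neg_zero, add_zero, zero_add, smul_neg, lie_zero] at t1 t2 t3 t4 t5
    have r1 := hz (g 1) (g 4) t1
    have r2 := hz (-g 0) (g 2) (by rw [← t2]; module)
    have r3 := hz (g 3) (-g 1) (by rw [← t3]; module)
    have k0 : g 0 = 0 := neg_eq_zero.mp r2.1
    obtain ⟨k1, k4⟩ := r1
    have k2 := r2.2
    have k3 := r3.1
    simp only [k0, k1, k2, k3, k4, zero_smul, zero_add] at hg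
    obtain ⟨k5, k6⟩ := hz _ _ hg
    intro i; fin_cases i <;> assumption
  let b := basisOfLinearIndependentOfCardEqFinrank hli (by simp [hdim])
  refine ⟨b, ?_⟩
  simp only [b, coe_basisOfLinearIndependentOfCardEqFinrank]
  refine ⟨h12, h34, h15, h23, ?_⟩
  intro i j hij
  fin_cases i <;> fin_cases j <;> first
    | exact absurd hij (by decide)
    | (intros; first | exact hz1 _ | exact hz2 _ | assumption | (exfalso; simp_all; done))

lemma mkL2 {L : Type u} [LieRing L] [LieAlgebra F L] [FiniteDimensional F L]
    (hdim : finrank F L = 7) (e1 e2 e3 e4 e5 z1 z2 : L)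
    (hz : ∀ a b : F, a • z1 + b • z2 = 0 → a = 0 ∧ b = 0)
    (hz1 : ∀ x : L, ⁅x, z1⁆ = 0) (hz2 : ∀ x : L, ⁅x, z2⁆ = 0)
    (h12 : ⁅e1, e2⁆ = z1) (h13 : ⁅e1, e3⁆ = 0) (h14 : ⁅e1, e4⁆ = z2) (h15 : ⁅e1, e5⁆ = 0) (h23 : ⁅e2, e3⁆ = 0) (h24 : ⁅e2, e4⁆ = 0) (h25 : ⁅e2, e5⁆ = 0) (h34 : ⁅e3, e4⁆ = 0) (h35 : ⁅e3, e5⁆ = z2) (h45 : ⁅e4, e5⁆ = 0) :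
    IsL2 F L := by
  have s12 : ⁅e2, e1⁆ = -(z1) := by rw [← lie_skew, h12]
  have s13 : ⁅e3, e1⁆ = -(0) := by rw [← lie_skew, h13]
  have s14 : ⁅e4, e1⁆ = -(z2) := by rw [← lie_skew, h14]
  have s15 : ⁅e5, e1⁆ = -(0) := by rw [← lie_skew, h15]
  have s23 : ⁅e3, e2⁆ = -(0) := by rw [← lie_skew, h23]
  have s24 : ⁅e4, e2⁆ = -(0) := by rw [← lie_skew, h24]
  have s25 : ⁅e5, e2⁆ = -(0) := by rw [← lie_skew, h25]
  have s34 : ⁅e4, e3⁆ = -(0) := by rw [← lie_skew, h34]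
  have s35 : ⁅e5, e3⁆ = -(z2) := by rw [← lie_skew, h35]
  have s45 : ⁅e5, e4⁆ = -(0) := by rw [← lie_skew, h45]
  have hli : LinearIndependent F ![e1, e2, e3, e4, e5, z1, z2] := by
    rw [Fintype.linearIndependent_iff]
    intro g hg
    simp [Fin.sum_univ_seven] at hg
    have t1 := congrArg (fun v => ⁅e1, v⁆) hg
    have t2 := congrArg (fun v => ⁅e2, v⁆) hg
    have t3 := congrArg (fun v => ⁅e3, v⁆) hg
    have t4 := congrArg (fun v => ⁅e4, v⁆) hg
    have t5 := congrArg (fun v => ⁅e5, v⁆) hg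
    simp only [lie_add, lie_smul, lie_self, hz1, hz2, h12, h13, h14, h15, h23, h24, h25, h34, h35, h45, s12, s13, s14, s15, s23, s24, s25, s34, s35, s45, smul_zero, neg_zero, add_zero, zero_add, smul_neg, lie_zero] at t1 t2 t3 t4 t5
    have r1 := hz (g 1) (g 3) t1
    have r2 := hz (-g 0) 0 (by rw [← t2]; module)
    have r3 := hz 0 (g 4) (by rw [← t3]; module)
    have r5 := hz 0 (-g 2) (by rw [← t5]; module)
    have k0 : g 0 = 0 := neg_eq_zero.mp r2.1
    obtain ⟨k1, k3⟩ := r1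
    have k4 := r3.2
    have k2 : g 2 = 0 := neg_eq_zero.mp r5.2
    simp only [k0, k1, k2, k3, k4, zero_smul, zero_add] at hg
    obtain ⟨k5, k6⟩ := hz _ _ hg
    intro i; fin_cases i <;> assumption
  let b := basisOfLinearIndependentOfCardEqFinrank hli (by simp [hdim])
  refine ⟨b, ?_⟩
  simp only [b, coe_basisOfLinearIndependentOfCardEqFinrank]
  refine ⟨h12, h14, h35, ?_⟩
  intro i j hij
  fin_cases i <;> fin_cases j <;> first
    | exact absurd hij (by decide)
    | (intros; first | exact hz1 _ | exact hz2 _ | assumption | (exfalso; simp_all; done))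

end GH

/-- A 7-dimensional generalized Heisenberg Lie algebra of rank 2 over an arbitrary field
is isomorphic to `L₁` or `L₂`. -/
theorem gen_heisenberg_rank_two_dim_seven
    (F L : Type u) [Field F] [LieRing L] [LieAlgebra F L] [FiniteDimensional F L]
    (hdim : finrank F L = 7)
    (hgh : LieModule.lowerCentralSeries F L L 1 = LieAlgebra.center F L)
    (hder : finrank F ↥(LieModule.lowerCentralSeries F L L 1) = 2) :
    IsL1 F L ∨ IsL2 F L := by
  have hcen : ∀ z : L, z ∈ LieAlgebra.center F L ↔ ∀ x : L, ⁅x, z⁆ = 0 := fun z =>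
    LieModule.mem_maxTrivSubmodule _ _ _ z
  let Z : Submodule F L := (LieModule.lowerCentralSeries F L L 1).toSubmodule
  have hZ : finrank F Z = 2 := hder
  have hZc : ∀ z ∈ Z, ∀ x : L, ⁅x, z⁆ = 0 := fun z hz => (hcen z).mp (hgh ▸ hz)
  have hZc' : ∀ z ∈ Z, ∀ x : L, ⁅z, x⁆ = 0 := fun z hz x => by
    rw [← lie_skew, hZc z hz, neg_zero]
  have hcZ : ∀ z : L, (∀ x : L, ⁅x, z⁆ = 0) → z ∈ Z := fun z hz => by
    have := (hcen z).mpr hz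
    rw [← hgh] at this
    exact this
  have hspan : Z = Submodule.span F {m | ∃ x y : L, ⁅x, y⁆ = m} := by
    have h1 : LieModule.lowerCentralSeries F L L 1 = ⁅(⊤ : LieIdeal F L), (⊤ : LieIdeal F L)⁆ := by
      rw [LieModule.lowerCentralSeries_succ, LieModule.lowerCentralSeries_zero]
    change (LieModule.lowerCentralSeries F L L 1).toSubmodule = _
    rw [h1, LieSubmodule.lieIdeal_oper_eq_linear_span']
    simp
  have hbr : ∀ x y : L, ⁅x, y⁆ ∈ Z := fun x y => by
    rw [hspan]; exact Submodule.subset_span ⟨x, y, rfl⟩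
  obtain ⟨V, hVZ⟩ := Submodule.exists_isCompl Z
  have hVd : finrank F V = 5 := by
    have := Submodule.finrank_add_eq_of_isCompl hVZ
    omega
  have hdec : ∀ x : L, ∃ a ∈ Z, ∃ b ∈ V, a + b = x := fun x =>
    Submodule.mem_sup.mp (hVZ.sup_eq_top ▸ Submodule.mem_top (x := x))
  let bd := finBasisOfFinrankEq F Z hZ
  obtain ⟨P, hP⟩ := LinearMap.exists_leftInverse_of_injective Z.subtype
    (LinearMap.ker_eq_bot.mpr Z.subtype_injective)
  have hP' : ∀ z (hz : z ∈ Z), P z = ⟨z, hz⟩ := fun z hz => LinearMap.congr_fun hP ⟨z, hz⟩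
  let br : L →ₗ[F] L →ₗ[F] L := LinearMap.mk₂ F (fun x y => ⁅x, y⁆) add_lie smul_lie lie_add lie_smul
  let form (i : Fin 2) : V →ₗ[F] V →ₗ[F] F :=
    (br.compr₂ (bd.coord i ∘ₗ P)).domRestrict₁₂ V V
  have hform : ∀ i (x y : V), form i x y = bd.coord i (P ⁅(x : L), (y : L)⁆) := fun i x y => rfl
  have main : ∀ (A B : V →ₗ[F] V →ₗ[F] F) (z1 z2 : L), z1 ∈ Z → z2 ∈ Z →
      (∀ a b : F, a • z1 + b • z2 = 0 → a = 0 ∧ b = 0) →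
      (∀ x y : V, ⁅(x : L), (y : L)⁆ = A x y • z1 + B x y • z2) →
      (∀ x, A x x = 0) ∧ (∀ x, B x x = 0) ∧ (∀ x, A x = 0 → B x = 0 → x = 0) ∧
      (finrank F (LinearMap.ker A) = 3 → IsL2 F L) := by
    intro A B z1 z2 hz1 hz2 hz hAB
    have hA : ∀ x, A x x = 0 := fun x => (hz (A x x) (B x x) (by rw [← hAB, lie_self])).1
    have hB : ∀ x, B x x = 0 := fun x => (hz (A x x) (B x x) (by rw [← hAB, lie_self])).2
    have hk : ∀ x, A x = 0 → B x = 0 → x = 0 := by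
      intro x h1 h2
      have hxZ : (x : L) ∈ Z := by
        apply hcZ
        intro v
        obtain ⟨a, ha, b, hb, rfl⟩ := hdec v
        have := hAB x ⟨b, hb⟩
        rw [h1, h2] at this
        simp only [LinearMap.zero_apply, zero_smul, add_zero] at this
        rw [add_lie, hZc' a ha, ← lie_skew, this, neg_zero, zero_add]
      exact Subtype.ext ((Submodule.disjoint_def.mp hVZ.disjoint) x hxZ x.2)
    refine ⟨hA, hB, hk, fun h3 => ?_⟩
    obtain ⟨e1, e2, e3, e4, e5, h⟩ := GH.caseI A B hA hB hk hVd h3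
    obtain ⟨p12, p13, p14, p15, p23, p24, p25, p34, p35, p45,
      q12, q13, q14, q15, q23, q24, q25, q34, q35, q45⟩ := h
    apply GH.mkL2 hdim e1 e2 e3 e4 e5 z1 z2 hz (hZc z1 hz1) (hZc z2 hz2) <;>
    simp only [hAB, p12, p13, p14, p15, p23, p24, p25, p34, p35, p45,
      q12, q13, q14, q15, q23, q24, q25, q34, q35, q45, zero_smul, one_smul, add_zero, zero_add]
  have hz0 : ∀ a b : F, a • (bd 0 : L) + b • (bd 1 : L) = 0 → a = 0 ∧ b = 0 := by
    intro a b h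
    have h' : a • bd 0 + b • bd 1 = 0 := Subtype.ext (by simpa using h)
    have h0 := congrArg (bd.coord 0) h'
    have h1 := congrArg (bd.coord 1) h'
    simp at h0 h1
    exact ⟨h0, h1⟩
  have hAB0 : ∀ x y : V, ⁅(x : L), (y : L)⁆ = form 0 x y • (bd 0 : L) + form 1 x y • (bd 1 : L) := by
    intro x y
    have h := bd.sum_repr (P ⁅(x : L), (y : L)⁆)
    rw [Fin.sum_univ_two] at h
    have h' := congrArg Subtype.val h
    rw [hP' _ (hbr _ _)] at h'
    rw [hform, hform, hP' _ (hbr _ _)]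
    simpa using h'.symm
  obtain ⟨hA, hB, hk, hA3⟩ := main (form 0) (form 1) (bd 0) (bd 1) (bd 0).2 (bd 1).2 hz0 hAB0
  have hne : ∀ a b : F, (a ≠ 0 ∨ b ≠ 0) → a • form 0 + b • form 1 ≠ 0 := by
    intro a b hab h0
    let φ : L →ₗ[F] F := (a • bd.coord 0 + b • bd.coord 1) ∘ₗ P
    have h1 : Z ≤ LinearMap.ker φ := by
      rw [hspan, Submodule.span_le]
      rintro _ ⟨x, y, rfl⟩
      obtain ⟨c, hc, x, hx, rfl⟩ := hdec x
      obtain ⟨d, hd, y, hy, rfl⟩ := hdec y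
      have : ⁅c + x, d + y⁆ = ⁅x, y⁆ := by
        rw [add_lie, hZc' c hc, lie_add, hZc d hd, zero_add, zero_add]
      rw [this]
      exact LinearMap.congr_fun (LinearMap.congr_fun h0 ⟨x, hx⟩) ⟨y, hy⟩
    have h2 : ∀ i, a * bd.coord 0 (bd i) + b * bd.coord 1 (bd i) = 0 := by
      intro i
      have : φ (bd i) = 0 := h1 (bd i).2
      simp only [φ, LinearMap.comp_apply, hP' _ (bd i).2] at this
      exact this
    have h20 := h2 0
    have h21 := h2 1
    simp at h20 h21
    exact hab.elim (fun h => h h20) (fun h => h h21)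
  by_cases hall : ∀ a b : F, (a ≠ 0 ∨ b ≠ 0) →
      finrank F (LinearMap.ker (a • form 0 + b • form 1)) = 1
  · left
    obtain ⟨e1, e2, e3, e4, e5, h⟩ := GH.caseII (form 0) (form 1) hA hB hk hVd hall
    obtain ⟨p12, p13, p14, p15, p23, p24, p25, p34, p35, p45,
      q12, q13, q14, q15, q23, q24, q25, q34, q35, q45⟩ := h
    apply GH.mkL1 hdim e1 e2 e3 e4 e5 (bd 0) (bd 1) hz0 (hZc _ (bd 0).2) (hZc _ (bd 1).2) <;>
    simp only [hAB0, p12, p13, p14, p15, p23, p24, p25, p34, p35, p45,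
      q12, q13, q14, q15, q23, q24, q25, q34, q35, q45, zero_smul, one_smul, add_zero, zero_add]
  · right
    push Not at hall
    obtain ⟨a, b, hab, h1⟩ := hall
    have h3 : finrank F (LinearMap.ker (a • form 0 + b • form 1)) = 3 := by
      obtain ⟨k, hk⟩ := GH.even_corank (a • form 0 + b • form 1) (fun x => by
        change a * form 0 x x + b * form 1 x x = 0
        rw [hA, hB]; simp)
      rw [hVd] at hk
      have h5 : finrank F (LinearMap.ker (a • form 0 + b • form 1)) ≠ 5 := by
        intro h5
        apply hne a b hab
        rw [← LinearMap.ker_eq_top]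
        exact Submodule.eq_top_of_finrank_eq (by rw [h5, hVd])
      omega
    by_cases ha : a = 0
    · subst ha
      have hb : b ≠ 0 := by simpa using hab
      have hke : LinearMap.ker ((0 : F) • form 0 + b • form 1) = LinearMap.ker (form 1) := by
        rw [zero_smul, zero_add, LinearMap.ker_smul _ _ hb]
      rw [hke] at h3
      exact (main (form 1) (form 0) (bd 1) (bd 0) (bd 1).2 (bd 0).2
        (fun a b h => (hz0 b a (by rw [add_comm]; exact h)).symm)
        (fun x y => by rw [hAB0, add_comm])).2.2.2 h3
    · refine (main (a • form 0 + b • form 1) (form 1) (a⁻¹ • (bd 0 : L))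
        ((bd 1 : L) - (b * a⁻¹) • (bd 0 : L)) (Z.smul_mem _ (bd 0).2)
        (Z.sub_mem (bd 1).2 (Z.smul_mem _ (bd 0).2)) ?_ ?_).2.2.2 h3
      · intro c d h
        obtain ⟨r1, r2⟩ := hz0 (c * a⁻¹ - d * (b * a⁻¹)) d (by rw [← h]; module)
        subst r2
        simpa [ha] using r1
      · intro x y
        rw [hAB0]
        have : (a • form 0 + b • form 1) x y = a * form 0 x y + b * form 1 x y := rfl
        rw [this]
        have h1 : form 0 x y = (a * form 0 x y + b * form 1 x y) * a⁻¹ - form 1 x y * (b * a⁻¹) := by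
          field_simp; ring
        generalize form 0 x y = s at *
        generalize form 1 x y = t at *
        rw [smul_smul, smul_sub, smul_smul, add_sub_left_comm, ← sub_smul, ← h1, add_comm]
end

section
/- Let F be a field of characteristic different from 2 and let ε ∈ F. The Lie algebra L_{6,22}(ε) over F, with basis x₁,…,x₆ and nonzero brackets [x₁,x₂] = x₅ = [x₃,x₄], [x₁,x₃] = x₆, [x₂,x₄] = ε·x₆, is capable. -/
open Module

universe u

/-- `L` is isomorphic to `L_{6,22}(ε)`: basis `x₁,…,x₆` with `[x₁,x₂]=x₅=[x₃,x₄]`, `[x₁,x₃]=x₆`, `[x₂,x₄]=ε·x₆`. -/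
def IsL622 (F : Type u) (L : Type u) [Field F] [LieRing L] [LieAlgebra F L] (ε : F) : Prop :=
  ∃ b : Basis (Fin 6) F L,
    ⁅b 0, b 1⁆ = b 4 ∧
    ⁅b 2, b 3⁆ = b 4 ∧
    ⁅b 0, b 2⁆ = b 5 ∧
    ⁅b 1, b 3⁆ = ε • b 5 ∧
    ∀ i j : Fin 6, i < j → (i, j) ≠ (0, 1) → (i, j) ≠ (2, 3) → (i, j) ≠ (0, 2) → (i, j) ≠ (1, 3) → ⁅b i, b j⁆ = 0

/-- The one-dimensional central extension of `L` attached to a bilinear form `B`. -/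
structure CExt {F L : Type u} [Field F] [LieRing L] [LieAlgebra F L]
    (B : L →ₗ[F] L →ₗ[F] F) : Type u where
  /-- the underlying vector -/
  val : L × F

namespace CExt

variable {F L : Type u} [Field F] [LieRing L] [LieAlgebra F L] (B : L →ₗ[F] L →ₗ[F] F)

/-- The underlying equivalence with the product. -/
def toProd : CExt B ≃ L × F := ⟨CExt.val, CExt.mk, fun _ => rfl, fun _ => rfl⟩

instance : AddCommGroup (CExt B) := (toProd B).addCommGroup
instance : Module F (CExt B) := (toProd B).module F

variable {B}

theorem val_add (x y : CExt B) : (x + y).val = x.val + y.val := rfl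
theorem val_zero : (0 : CExt B).val = 0 := rfl
theorem val_smul (t : F) (x : CExt B) : (t • x).val = t • x.val := rfl
theorem ext' {x y : CExt B} (h1 : x.val.1 = y.val.1) (h2 : x.val.2 = y.val.2) : x = y := by
  cases x; cases y
  congr 1
  exact Prod.ext h1 h2

/-- The Lie ring structure. -/
@[reducible] def lieRing (halt : ∀ x, B x x = 0)
    (hcoc : ∀ x y z, B x ⁅y, z⁆ = B ⁅x, y⁆ z + B y ⁅x, z⁆) : LieRing (CExt B) where
  bracket x y := ⟨(⁅x.val.1, y.val.1⁆, B x.val.1 y.val.1)⟩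
  add_lie x y z := by apply ext' <;> simp [val_add]
  lie_add x y z := by apply ext' <;> simp [val_add]
  lie_self x := by apply ext' <;> simp [val_zero, halt]
  leibniz_lie x y z := by
    apply ext'
    · simp [val_add]
    · exact hcoc _ _ _

/-- The Lie algebra structure. -/
@[reducible] def lieAlgebra (halt : ∀ x, B x x = 0)
    (hcoc : ∀ x y z, B x ⁅y, z⁆ = B ⁅x, y⁆ z + B y ⁅x, z⁆) :
    letI := lieRing halt hcoc
    LieAlgebra F (CExt B) :=
  letI := lieRing halt hcoc
  { lie_smul := fun t x y => by
      apply ext'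
      · exact lie_smul t x.val.1 y.val.1
      · exact (B x.val.1).map_smul t y.val.1 }

theorem capable (halt : ∀ x, B x x = 0)
    (hcoc : ∀ x y z, B x ⁅y, z⁆ = B ⁅x, y⁆ z + B y ⁅x, z⁆)
    (hnd : ∀ x, (∀ y : L, ⁅y, x⁆ = 0) → (∀ y, B y x = 0) → x = 0) : IsCapable F L := by
  letI := lieRing halt hcoc
  letI := lieAlgebra halt hcoc
  let f : CExt B →ₗ⁅F⁆ L :=
    { toFun := fun x => x.val.1
      map_add' := fun _ _ => rfl
      map_smul' := fun _ _ => rfl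
      map_lie' := rfl }
  have hker : f.ker = LieAlgebra.center F (CExt B) := by
    ext x
    rw [LieHom.mem_ker, LieModule.mem_maxTrivSubmodule]
    constructor
    · intro h y
      have h : x.val.1 = 0 := h
      apply ext'
      · change ⁅y.val.1, x.val.1⁆ = 0
        rw [h, lie_zero]
      · change B y.val.1 x.val.1 = 0
        rw [h, map_zero]
    · intro h
      apply hnd
      · intro y
        exact congrArg (fun z : CExt B => z.val.1) (h ⟨(y, 0)⟩)
      · intro y
        exact congrArg (fun z : CExt B => z.val.2) (h ⟨(y, 0)⟩)
  have hr : f.range = ⊤ := by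
    rw [LieHom.range_eq_top]
    exact fun x => ⟨⟨(x, 0)⟩, rfl⟩
  have e : Nonempty (L ≃ₗ⁅F⁆ (CExt B ⧸ f.ker)) := by
    have e1 := f.quotKerEquivRange
    rw [hr] at e1
    exact ⟨(e1.trans LieSubalgebra.topEquiv).symm⟩
  rw [hker] at e
  exact e.elim fun e => ⟨{ carrier := CExt B, equiv := e }⟩

end CExt

theorem L622_bracket {F L : Type u} [Field F] [LieRing L] [LieAlgebra F L] (ε : F)
    (b : Basis (Fin 6) F L) (h01 : ⁅b 0, b 1⁆ = b 4) (h23 : ⁅b 2, b 3⁆ = b 4)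
    (h02 : ⁅b 0, b 2⁆ = b 5) (h13 : ⁅b 1, b 3⁆ = ε • b 5)
    (h0 : ∀ i j : Fin 6, i < j → (i, j) ≠ (0, 1) → (i, j) ≠ (2, 3) → (i, j) ≠ (0, 2) →
      (i, j) ≠ (1, 3) → ⁅b i, b j⁆ = 0) (x y : L) :
    ⁅x, y⁆ = (b.coord 0 x * b.coord 1 y - b.coord 1 x * b.coord 0 y
        + b.coord 2 x * b.coord 3 y - b.coord 3 x * b.coord 2 y) • b 4
      + (b.coord 0 x * b.coord 2 y - b.coord 2 x * b.coord 0 y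
        + ε * (b.coord 1 x * b.coord 3 y - b.coord 3 x * b.coord 1 y)) • b 5 := by
  have hz : ∀ i j : Fin 6, i < j → (i, j) ≠ (0, 1) → (i, j) ≠ (2, 3) → (i, j) ≠ (0, 2) →
      (i, j) ≠ (1, 3) → ⁅b j, b i⁆ = 0 := by
    intro i j a1 a2 a3 a4 a5
    rw [← lie_skew, h0 i j a1 a2 a3 a4 a5, neg_zero]
  have h10 : ⁅b 1, b 0⁆ = -b 4 := by rw [← lie_skew, h01]
  have h32 : ⁅b 3, b 2⁆ = -b 4 := by rw [← lie_skew, h23]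
  have h20 : ⁅b 2, b 0⁆ = -b 5 := by rw [← lie_skew, h02]
  have h31 : ⁅b 3, b 1⁆ = -(ε • b 5) := by rw [← lie_skew, h13]
  conv_lhs => rw [← b.sum_repr x, ← b.sum_repr y]
  simp only [Fin.sum_univ_six, add_lie, lie_add, smul_lie, lie_smul, lie_self, h01, h23, h02, h13,
    h10, h32, h20, h31, Basis.coord_apply,
    h0 0 3 (by decide) (by decide) (by decide) (by decide) (by decide),
    h0 0 4 (by decide) (by decide) (by decide) (by decide) (by decide),
    h0 0 5 (by decide) (by decide) (by decide) (by decide) (by decide),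
    h0 1 2 (by decide) (by decide) (by decide) (by decide) (by decide),
    h0 1 4 (by decide) (by decide) (by decide) (by decide) (by decide),
    h0 1 5 (by decide) (by decide) (by decide) (by decide) (by decide),
    h0 2 4 (by decide) (by decide) (by decide) (by decide) (by decide),
    h0 2 5 (by decide) (by decide) (by decide) (by decide) (by decide),
    h0 3 4 (by decide) (by decide) (by decide) (by decide) (by decide),
    h0 3 5 (by decide) (by decide) (by decide) (by decide) (by decide),
    h0 4 5 (by decide) (by decide) (by decide) (by decide) (by decide),
    hz 0 3 (by decide) (by decide) (by decide) (by decide) (by decide),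
    hz 0 4 (by decide) (by decide) (by decide) (by decide) (by decide),
    hz 0 5 (by decide) (by decide) (by decide) (by decide) (by decide),
    hz 1 2 (by decide) (by decide) (by decide) (by decide) (by decide),
    hz 1 4 (by decide) (by decide) (by decide) (by decide) (by decide),
    hz 1 5 (by decide) (by decide) (by decide) (by decide) (by decide),
    hz 2 4 (by decide) (by decide) (by decide) (by decide) (by decide),
    hz 2 5 (by decide) (by decide) (by decide) (by decide) (by decide),
    hz 3 4 (by decide) (by decide) (by decide) (by decide) (by decide),
    hz 3 5 (by decide) (by decide) (by decide) (by decide) (by decide),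
    hz 4 5 (by decide) (by decide) (by decide) (by decide) (by decide), smul_zero]
  module

/-- Over a field of characteristic different from 2, the Lie algebra `L_{6,22}(ε)`
is capable. -/
theorem L622_isCapable
    (F L : Type u) [Field F] [LieRing L] [LieAlgebra F L]
    (hchar : ringChar F ≠ 2) (ε : F)
    (h : IsL622 F L ε) :
    IsCapable F L := by
  obtain ⟨b, h01, h23, h02, h13, h0⟩ := h
  have hb := L622_bracket ε b h01 h23 h02 h13 h0
  let m : Fin 6 → Fin 6 → L →ₗ[F] L →ₗ[F] F := fun i j =>
    (LinearMap.mul F F).compl₁₂ (b.coord i) (b.coord j)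
  let B : L →ₗ[F] L →ₗ[F] F := m 2 4 - m 4 2 + m 1 5 - m 5 1
  have hB : ∀ x y, B x y = b.coord 2 x * b.coord 4 y - b.coord 4 x * b.coord 2 y
      + b.coord 1 x * b.coord 5 y - b.coord 5 x * b.coord 1 y := fun x y => rfl
  have hc : ∀ i j : Fin 6, b.coord i (b j) = if j = i then 1 else 0 := by
    intro i j
    rw [Basis.coord_apply, Basis.repr_self, Finsupp.single_apply]
  apply CExt.capable (B := B)
  · intro x
    rw [hB]
    ring
  · intro x y z
    rw [hB, hB, hB, hb y z, hb x y, hb x z]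
    simp only [map_add, map_smul, hc, smul_eq_mul]
    simp
    ring
  · intro x h1 h2
    have e4 : ∀ y, b.coord 4 ⁅y, x⁆ = 0 := fun y => by rw [h1, map_zero]
    have e5 : ∀ y, b.coord 5 ⁅y, x⁆ = 0 := fun y => by rw [h1, map_zero]
    simp only [hb, map_add, map_smul, hc, smul_eq_mul] at e4 e5
    have a1 := e4 (b 0)
    have a0 := e4 (b 1)
    have a3 := e4 (b 2)
    have a2 := e4 (b 3)
    have a4 := h2 (b 2)
    have a5 := h2 (b 1)
    rw [hB] at a4 a5
    simp only [hc] at a0 a1 a2 a3 a4 a5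
    simp at a0 a1 a2 a3 a4 a5
    apply b.repr.injective
    ext i
    fin_cases i <;> simp [a0, a1, a2, a3, a4, a5]
end

section
/- Let F be a field of characteristic 2 and let η ∈ F with η = 0 or η = ω, where ω ∈ F \ {x² + x : x ∈ F}. The Lie algebra L_{6,7}^{(2)}(η) over F, with basis x₁,…,x₆ and nonzero brackets [x₁,x₂] = x₅, [x₁,x₃] = x₆, [x₂,x₄] = η·x₆, [x₃,x₄] = x₅ + x₆, is capable. -/
open Module

universe u

/-- `L` is isomorphic to `L_{6,7}^{(2)}(η)`: basis `x₁,…,x₆` with `[x₁,x₂]=x₅`, `[x₁,x₃]=x₆`, `[x₂,x₄]=η·x₆`, `[x₃,x₄]=x₅+x₆`. -/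
def IsL67 (F : Type u) (L : Type u) [Field F] [LieRing L] [LieAlgebra F L] (η : F) : Prop :=
  ∃ b : Basis (Fin 6) F L,
    ⁅b 0, b 1⁆ = b 4 ∧
    ⁅b 0, b 2⁆ = b 5 ∧
    ⁅b 1, b 3⁆ = η • b 5 ∧
    ⁅b 2, b 3⁆ = b 4 + b 5 ∧
    ∀ i j : Fin 6, i < j → (i, j) ≠ (0, 1) → (i, j) ≠ (0, 2) → (i, j) ≠ (1, 3) → (i, j) ≠ (2, 3) → ⁅b i, b j⁆ = 0

/-- Central extension of `L` by `F` given by a 2-cocycle `f`. -/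
def CExt_s14 {F L : Type u} (_f : L → L → F) : Type u := L × F

theorem capable_of_cocycle {F L : Type u} [Field F] [LieRing L] [LieAlgebra F L]
    (f : L → L → F)
    (fadd : ∀ x y z, f (x + y) z = f x z + f y z)
    (addf : ∀ x y z, f x (y + z) = f x y + f x z)
    (fsmul : ∀ (c : F) x y, f x (c • y) = c * f x y)
    (falt : ∀ x, f x x = 0)
    (fjac : ∀ x y z, f x ⁅y, z⁆ = f ⁅x, y⁆ z + f y ⁅x, z⁆)
    (hz : ∀ z : L, (∀ y : L, ⁅z, y⁆ = 0) → (∀ y, f z y = 0) → z = 0) :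
    IsCapable F L := by
  let _ : AddCommGroup (CExt_s14 f) := inferInstanceAs (AddCommGroup (L × F))
  let _ : Module F (CExt_s14 f) := inferInstanceAs (Module F (L × F))
  let _ : LieRing (CExt_s14 f) :=
    { bracket := fun x y => ((⁅x.1, y.1⁆, f x.1 y.1) : L × F)
      add_lie := fun x y z => Prod.ext (add_lie x.1 y.1 z.1) (fadd _ _ _)
      lie_add := fun x y z => Prod.ext (lie_add x.1 y.1 z.1) (addf _ _ _)
      lie_self := fun x => Prod.ext (lie_self x.1) (falt _)
      leibniz_lie := fun x y z => Prod.ext (leibniz_lie x.1 y.1 z.1) (fjac _ _ _) }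
  let _ : LieAlgebra F (CExt_s14 f) :=
    { lie_smul := fun c x y => Prod.ext (lie_smul c x.1 y.1) (fsmul _ _ _) }
  let p : CExt_s14 f →ₗ⁅F⁆ L :=
    { toFun := fun x => x.1
      map_add' := fun _ _ => rfl
      map_smul' := fun _ _ => rfl
      map_lie' := rfl }
  have f0 : ∀ y, f 0 y = 0 := fun y => by
    have := fadd 0 0 y
    simpa using this
  have hs : Function.Surjective p := fun x => ⟨((x, 0) : L × F), rfl⟩
  have hk : p.ker = LieAlgebra.center F (CExt_s14 f) := by
    ext z
    rw [LieHom.mem_ker, LieModule.mem_maxTrivSubmodule]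
    constructor
    · intro h y
      have h1 : z.1 = 0 := h
      rw [← lie_skew, neg_eq_zero]
      refine Prod.ext ?_ ?_
      · change ⁅z.1, y.1⁆ = 0
        rw [h1, zero_lie]
      · change f z.1 y.1 = 0
        rw [h1, f0]
    · intro h
      have h' : ∀ y : L, ⁅z, (show CExt_s14 f from ((y, 0) : L × F))⁆ = 0 := fun y => by
        rw [← lie_skew, h, neg_zero]
      exact hz z.1 (fun y => congrArg Prod.fst (h' y)) (fun y => congrArg Prod.snd (h' y))
  have e1 : (CExt_s14 f ⧸ p.ker) ≃ₗ⁅F⁆ L :=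
    p.quotKerEquivRange.trans
      ((LieEquiv.ofEq _ _ (by rw [(LieHom.range_eq_top p).2 hs])).trans LieSubalgebra.topEquiv)
  rw [hk] at e1
  exact ⟨{ carrier := CExt_s14 f, equiv := e1.symm }⟩

/-- Over a field of characteristic 2, the Lie algebra `L_{6,7}^{(2)}(η)`, with `η = 0` or
`η = ω` for a fixed `ω ∈ F \ {x² + x : x ∈ F}`, is capable. -/
theorem L67_isCapable
    (F L : Type u) [Field F] [LieRing L] [LieAlgebra F L]
    (hchar : ringChar F = 2) (η ω : F)
    (hω : ∀ x : F, x ^ 2 + x ≠ ω)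
    (hη : η = 0 ∨ η = ω)
    (h : IsL67 F L η) :
    IsCapable F L := by
  obtain ⟨b, h01, h02, h13, h23, h0⟩ := h
  have key : ∀ x y : L, ⁅x, y⁆ =
      (b.repr x 0 * b.repr y 1 - b.repr x 1 * b.repr y 0
        + (b.repr x 2 * b.repr y 3 - b.repr x 3 * b.repr y 2)) • b 4
      + (b.repr x 0 * b.repr y 2 - b.repr x 2 * b.repr y 0
        + η * (b.repr x 1 * b.repr y 3 - b.repr x 3 * b.repr y 1)
        + (b.repr x 2 * b.repr y 3 - b.repr x 3 * b.repr y 2)) • b 5 := by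
    intro x y
    have h0' : ∀ i j : Fin 6, i < j → (i, j) ≠ (0, 1) → (i, j) ≠ (0, 2) → (i, j) ≠ (1, 3) →
        (i, j) ≠ (2, 3) → ⁅b j, b i⁆ = 0 := by
      intro i j a1 a2 a3 a4 a5
      rw [← lie_skew, h0 i j a1 a2 a3 a4 a5, neg_zero]
    have g01 : ⁅b 1, b 0⁆ = - b 4 := by rw [← lie_skew, h01]
    have g02 : ⁅b 2, b 0⁆ = - b 5 := by rw [← lie_skew, h02]
    have g13 : ⁅b 3, b 1⁆ = - (η • b 5) := by rw [← lie_skew, h13]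
    have g23 : ⁅b 3, b 2⁆ = - (b 4 + b 5) := by rw [← lie_skew, h23]
    conv_lhs => rw [← b.sum_repr x, ← b.sum_repr y]
    simp only [Fin.sum_univ_six, add_lie, lie_add, smul_lie, lie_smul, lie_self, h01, h02, h13, h23,
      g01, g02, g13, g23,
      h0 0 3 (by decide) (by decide) (by decide) (by decide) (by decide),
      h0 0 4 (by decide) (by decide) (by decide) (by decide) (by decide),
      h0 0 5 (by decide) (by decide) (by decide) (by decide) (by decide),
      h0 1 2 (by decide) (by decide) (by decide) (by decide) (by decide),
      h0 1 4 (by decide) (by decide) (by decide) (by decide) (by decide),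
      h0 1 5 (by decide) (by decide) (by decide) (by decide) (by decide),
      h0 2 4 (by decide) (by decide) (by decide) (by decide) (by decide),
      h0 2 5 (by decide) (by decide) (by decide) (by decide) (by decide),
      h0 3 4 (by decide) (by decide) (by decide) (by decide) (by decide),
      h0 3 5 (by decide) (by decide) (by decide) (by decide) (by decide),
      h0 4 5 (by decide) (by decide) (by decide) (by decide) (by decide),
      h0' 0 3 (by decide) (by decide) (by decide) (by decide) (by decide),
      h0' 0 4 (by decide) (by decide) (by decide) (by decide) (by decide),
      h0' 0 5 (by decide) (by decide) (by decide) (by decide) (by decide),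
      h0' 1 2 (by decide) (by decide) (by decide) (by decide) (by decide),
      h0' 1 4 (by decide) (by decide) (by decide) (by decide) (by decide),
      h0' 1 5 (by decide) (by decide) (by decide) (by decide) (by decide),
      h0' 2 4 (by decide) (by decide) (by decide) (by decide) (by decide),
      h0' 2 5 (by decide) (by decide) (by decide) (by decide) (by decide),
      h0' 3 4 (by decide) (by decide) (by decide) (by decide) (by decide),
      h0' 3 5 (by decide) (by decide) (by decide) (by decide) (by decide),
      h0' 4 5 (by decide) (by decide) (by decide) (by decide) (by decide)]
    module
  have k1 : ∀ x y : L, b.repr ⁅x, y⁆ 1 = 0 := fun x y => by rw [key]; simp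
  have k2 : ∀ x y : L, b.repr ⁅x, y⁆ 2 = 0 := fun x y => by rw [key]; simp
  have k4 : ∀ x y : L, b.repr ⁅x, y⁆ 4 =
      b.repr x 0 * b.repr y 1 - b.repr x 1 * b.repr y 0
        + (b.repr x 2 * b.repr y 3 - b.repr x 3 * b.repr y 2) := fun x y => by rw [key]; simp
  have k5 : ∀ x y : L, b.repr ⁅x, y⁆ 5 =
      b.repr x 0 * b.repr y 2 - b.repr x 2 * b.repr y 0
        + η * (b.repr x 1 * b.repr y 3 - b.repr x 3 * b.repr y 1)
        + (b.repr x 2 * b.repr y 3 - b.repr x 3 * b.repr y 2) := fun x y => by rw [key]; simp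
  refine capable_of_cocycle (fun x y =>
    (b.repr x 4 * b.repr y 2 - b.repr x 2 * b.repr y 4)
    - (b.repr x 4 * b.repr y 1 - b.repr x 1 * b.repr y 4)
    + (b.repr x 5 * b.repr y 1 - b.repr x 1 * b.repr y 5)) ?_ ?_ ?_ ?_ ?_ ?_
  · intro x y z
    simp only [map_add, Finsupp.add_apply]
    ring
  · intro x y z
    simp only [map_add, Finsupp.add_apply]
    ring
  · intro c x y
    simp only [map_smul, Finsupp.smul_apply, smul_eq_mul]
    ring
  · intro x
    ring
  · intro x y z
    simp only [k1, k2, k4, k5]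
    ring
  · intro z hz hf
    have a1 := k4 z (b 0)
    have a2 := k5 z (b 0)
    have a0 := k4 z (b 1)
    have a3 := k4 z (b 2)
    have c1 := hf (b 1)
    have c2 := hf (b 2)
    rw [hz] at a0 a1 a2 a3
    simp [Finsupp.single_apply] at a0 a1 a2 a3 c1 c2
    have c5 : b.repr z 5 = 0 := by simpa [c2] using c1
    apply b.repr.injective
    ext i
    rw [map_zero]
    fin_cases i <;> simp [*]
end

section
/- Let L be a finite-dimensional nilpotent Lie algebra over a field F of nilpotency class 3 with dim [L,L] = 2. Then there exist ideals T and A of L with L = T ⊕ A (internal direct sum of Lie algebras), A abelian, and Z(T) = [L,L] ∩ Z(L) = L³ = T³, where L³ = [L,[L,L]]; in particular T is a stem Lie algebra. -/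
open Module

universe u

/-- A finite-dimensional nilpotent Lie algebra of class 3 with 2-dimensional derived
subalgebra decomposes as `L = T ⊕ A` with `A` abelian and
`Z(T) = [L,L] ∩ Z(L) = L³ = T³`; in particular `T` is stem. -/
theorem class_three_decomposition_stem_plus_abelian
    (F L : Type u) [Field F] [LieRing L] [LieAlgebra F L] [FiniteDimensional F L]
    (hclass : LieModule.lowerCentralSeries F L L 2 ≠ ⊥ ∧ LieModule.lowerCentralSeries F L L 3 = ⊥)
    (hder : finrank F ↥(LieModule.lowerCentralSeries F L L 1) = 2) :
    ∃ T A : LieIdeal F L,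
      T ⊓ A = ⊥ ∧ T ⊔ A = ⊤ ∧
      (∀ x ∈ A, ∀ y ∈ A, ⁅x, y⁆ = 0) ∧
      (∀ x : L, (x ∈ T ∧ ∀ y ∈ T, ⁅x, y⁆ = 0) ↔ x ∈ LieModule.lowerCentralSeries F L L 2) ∧
      LieModule.lowerCentralSeries F L L 1 ⊓ LieAlgebra.center F L = LieModule.lowerCentralSeries F L L 2 ∧
      ⁅T, ⁅T, T⁆⁆ = LieModule.lowerCentralSeries F L L 2 ∧
      (∀ x ∈ T, (∀ y ∈ T, ⁅x, y⁆ = 0) → x ∈ ⁅T, T⁆) := by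
  obtain ⟨h2, h3⟩ := hclass
  set D : LieIdeal F L := LieModule.lowerCentralSeries F L L 1 with hD
  set K : LieIdeal F L := LieModule.lowerCentralSeries F L L 2 with hK
  set Z : LieIdeal F L := LieAlgebra.center F L with hZ
  have hD1 : D = ⁅(⊤ : LieIdeal F L), (⊤ : LieIdeal F L)⁆ := by
    rw [hD, LieModule.lowerCentralSeries_succ, LieModule.lowerCentralSeries_zero]
  have hK1 : K = ⁅(⊤ : LieIdeal F L), D⁆ := by
    rw [hK, LieModule.lowerCentralSeries_succ]
  have hK3 : ⁅(⊤ : LieIdeal F L), K⁆ = ⊥ := by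
    rw [← h3, LieModule.lowerCentralSeries_succ]
  have memZ : ∀ x : L, x ∈ Z ↔ ∀ y : L, ⁅y, x⁆ = 0 := fun x => by
    rw [hZ, LieModule.mem_maxTrivSubmodule]
  have hKZ : K ≤ Z := by
    intro x hx
    rw [memZ]
    intro y
    exact (LieSubmodule.lie_eq_bot_iff _ _).1 hK3 y trivial x hx
  have hKD : K ≤ D := by rw [hK1]; exact LieSubmodule.lie_le_right _ _
  have hDZ : ¬ D ≤ Z := by
    intro h
    apply h2
    rw [hK1, LieSubmodule.lie_eq_bot_iff]
    intro y _ x hx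
    exact (memZ x).1 (h hx) y
  have hDZK : D ⊓ Z = K := by
    symm
    have hle : K ≤ D ⊓ Z := le_inf hKD hKZ
    have hlt : finrank F (D ⊓ Z : LieIdeal F L).toSubmodule < 2 := by
      rw [← hder]
      apply Submodule.finrank_lt_finrank_of_lt
      refine lt_of_le_of_ne (fun x hx => hx.1) (fun h => hDZ ?_)
      intro x hx
      have : x ∈ (D ⊓ Z : LieIdeal F L).toSubmodule := by rw [h]; exact hx
      exact this.2
    have hpos : 0 < finrank F K.toSubmodule := by
      rw [Nat.pos_iff_ne_zero, Ne, Submodule.finrank_eq_zero]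
      simpa using h2
    apply LieSubmodule.toSubmodule_injective
    apply Submodule.eq_of_le_of_finrank_le
    · exact hle
    · omega
  obtain ⟨B, hB⟩ := exists_isCompl K.toSubmodule
  have hAZ : B ⊓ Z.toSubmodule ≤ Z.toSubmodule := inf_le_right
  have brD : ∀ x y : L, ⁅x, y⁆ ∈ D := fun x y => by
    rw [hD1]; exact LieSubmodule.lie_mem_lie trivial trivial
  let A : LieIdeal F L := { B ⊓ Z.toSubmodule with
    lie_mem := by
      intro x m hm
      have h0 : ⁅x, m⁆ = 0 := (memZ m).1 hm.2 x
      rw [h0]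
      exact (B ⊓ Z.toSubmodule).zero_mem }
  have memA : ∀ x, x ∈ A ↔ x ∈ B ∧ x ∈ Z := fun x => Iff.rfl
  have hdis : Disjoint A.toSubmodule D.toSubmodule := by
    rw [Submodule.disjoint_def]
    intro x hxA hxD
    have hxK : x ∈ K := by rw [← hDZK]; exact ⟨hxD, hxA.2⟩
    exact Submodule.disjoint_def.1 hB.disjoint x hxK hxA.1
  obtain ⟨T', hDT, hT⟩ := hdis.symm.exists_isCompl
  let T : LieIdeal F L := { T' with
    lie_mem := by
      intro x m _
      exact hDT (brD x m) }
  have hsup : T ⊔ A = ⊤ := by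
    apply LieSubmodule.toSubmodule_injective
    rw [LieSubmodule.sup_toSubmodule]
    exact hT.sup_eq_top
  have hinf : T ⊓ A = ⊥ := by
    apply LieSubmodule.toSubmodule_injective
    rw [LieSubmodule.inf_toSubmodule]
    exact hT.inf_eq_bot
  have hAc : ∀ I : LieIdeal F L, ⁅A, I⁆ = ⊥ := by
    intro I
    rw [LieSubmodule.lie_eq_bot_iff]
    intro x hx y _
    rw [← lie_skew, (memZ x).1 hx.2 y, neg_zero]
  have hcA : ∀ I : LieIdeal F L, ⁅I, A⁆ = ⊥ := fun I => by
    rw [LieSubmodule.lie_comm, hAc]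
  have hTT : ⁅T, T⁆ = D := by
    rw [hD1, ← hsup]
    simp [LieSubmodule.sup_lie, LieSubmodule.lie_sup, hAc, hcA]
  have hTD : ⁅T, D⁆ = K := by
    rw [hK1, ← hsup]
    simp [LieSubmodule.sup_lie, hAc]
  have hDT' : D ≤ T := hDT
  have hcent : ∀ x : L, (x ∈ T ∧ ∀ y ∈ T, ⁅x, y⁆ = 0) ↔ x ∈ K := by
    intro x
    constructor
    · rintro ⟨hxT, hx⟩
      have hxZ : x ∈ Z := by
        rw [memZ]
        intro y
        have hy : y ∈ T ⊔ A := by rw [hsup]; trivial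
        obtain ⟨t, ht, a, ha, rfl⟩ := (LieSubmodule.mem_sup _ _ _).1 hy
        rw [add_lie, ← lie_skew, hx t ht, ← lie_skew, (memZ a).1 ha.2 x]
        simp
      have hx' : x ∈ K.toSubmodule ⊔ B := by rw [hB.sup_eq_top]; trivial
      obtain ⟨k, hk, b, hb, rfl⟩ := Submodule.mem_sup.1 hx'
      have hbZ : b ∈ Z := by simpa using sub_mem hxZ (hKZ hk)
      have hbT : b ∈ T := by simpa using sub_mem hxT (hDT' (hKD hk))
      have hb0 : b ∈ T ⊓ A := ⟨hbT, hb, hbZ⟩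
      rw [hinf, LieSubmodule.mem_bot] at hb0
      rw [hb0, add_zero]
      exact hk
    · intro hx
      refine ⟨hDT' (hKD hx), fun y _ => ?_⟩
      rw [← lie_skew, (memZ x).1 (hKZ hx) y, neg_zero]
  refine ⟨T, A, hinf, hsup, ?_, hcent, hDZK, ?_, ?_⟩
  · intro x _ y hy
    exact (memZ y).1 hy.2 x
  · rw [hTT, hTD]
  · intro x hx h
    rw [hTT]
    exact hKD ((hcent x).1 ⟨hx, h⟩)
end

section
/- Let L be a finite-dimensional nilpotent stem Lie algebra over a field F of nilpotency class 3 with dim [L,L] = 2, and suppose L = I + K where I is an ideal of L isomorphic to L_{4,3}, K is a nonzero abelian subalgebra of L with K ∩ I = 0, and [I,K] ⊆ Z(I) = Z(L). Then dim K = 1, [I,K] = Z(L), and L is isomorphic to L_{5,5} (in particular dim L = 5). -/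
open Module

universe u

/-- `L` is isomorphic to `L_{5,5}`: basis `x₁,…,x₅` with `[x₁,x₂]=x₃`, `[x₁,x₃]=x₅`, `[x₂,x₄]=x₅`. -/
def IsL55 (F : Type u) (L : Type u) [Field F] [LieRing L] [LieAlgebra F L] : Prop :=
  ∃ b : Basis (Fin 5) F L,
    ⁅b 0, b 1⁆ = b 2 ∧
    ⁅b 0, b 2⁆ = b 4 ∧
    ⁅b 1, b 3⁆ = b 4 ∧
    ∀ i j : Fin 5, i < j → (i, j) ≠ (0, 1) → (i, j) ≠ (0, 2) → (i, j) ≠ (1, 3) → ⁅b i, b j⁆ = 0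

/-- If a finite-dimensional stem nilpotent Lie algebra `L` of class 3 with
`dim [L,L] = 2` satisfies `L = I + K` with `I ≅ L_{4,3}` an ideal, `K` a nonzero abelian
subalgebra, `K ∩ I = 0` and `[I,K] ⊆ Z(I) = Z(L)`, then `dim K = 1`, `[I,K] = Z(L)`,
`dim L = 5` and `L ≅ L_{5,5}`. -/
theorem stem_class_three_semidirect_L43_abelian
    (F L : Type u) [Field F] [LieRing L] [LieAlgebra F L] [FiniteDimensional F L]
    (hclass : LieModule.lowerCentralSeries F L L 2 ≠ ⊥ ∧ LieModule.lowerCentralSeries F L L 3 = ⊥)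
    (hder : finrank F ↥(LieModule.lowerCentralSeries F L L 1) = 2)
    (hstem : LieAlgebra.center F L ≤ LieModule.lowerCentralSeries F L L 1)
    (I : LieIdeal F L) (K : LieSubalgebra F L)
    (x : Fin 4 → L)
    (hxspan : I.toSubmodule = Submodule.span F (Set.range x))
    (hxind : LinearIndependent F x)
    (hx1 : ⁅x 0, x 1⁆ = x 2) (hx2 : ⁅x 0, x 2⁆ = x 3)
    (hx0 : ∀ i j : Fin 4, i < j → (i, j) ≠ (0, 1) → (i, j) ≠ (0, 2) → ⁅x i, x j⁆ = 0)
    (hKne : K ≠ ⊥)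
    (hKab : ∀ a ∈ K, ∀ b ∈ K, ⁅a, b⁆ = 0)
    (hIK : I.toSubmodule ⊓ K.toSubmodule = ⊥)
    (hsum : I.toSubmodule ⊔ K.toSubmodule = ⊤)
    (hIKZ : ∀ a ∈ I, ∀ b ∈ K, ⁅a, b⁆ ∈ LieAlgebra.center F L)
    (hZI : ∀ z : L, (z ∈ I ∧ ∀ y ∈ I, ⁅z, y⁆ = 0) ↔ z ∈ LieAlgebra.center F L) :
    finrank F ↥K = 1 ∧
    Submodule.span F {z : L | ∃ a ∈ I, ∃ b ∈ K, ⁅a, b⁆ = z} =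
      (LieAlgebra.center F L).toSubmodule ∧
    finrank F L = 5 ∧
    IsL55 F L := by
  have b03 : ⁅x 0, x 3⁆ = 0 := hx0 0 3 (by decide) (by decide) (by decide)
  have b12 : ⁅x 1, x 2⁆ = 0 := hx0 1 2 (by decide) (by decide) (by decide)
  have b13 : ⁅x 1, x 3⁆ = 0 := hx0 1 3 (by decide) (by decide) (by decide)
  have b23 : ⁅x 2, x 3⁆ = 0 := hx0 2 3 (by decide) (by decide) (by decide)
  have sk : ∀ {a b : L}, ⁅a, b⁆ = 0 → ⁅b, a⁆ = 0 := fun {a b} h => by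
    rw [← lie_skew, h, neg_zero]
  have hxI : ∀ i, x i ∈ I := fun i => by
    rw [← LieSubmodule.mem_toSubmodule, hxspan]
    exact Submodule.subset_span ⟨i, rfl⟩
  have hIform : ∀ y ∈ I, ∃ c : Fin 4 → F,
      c 0 • x 0 + c 1 • x 1 + c 2 • x 2 + c 3 • x 3 = y := fun y hy => by
    rw [← LieSubmodule.mem_toSubmodule, hxspan, Submodule.mem_span_range_iff_exists_fun] at hy
    obtain ⟨c, hc⟩ := hy
    exact ⟨c, by rw [← hc, Fin.sum_univ_four]⟩
  have hLform : ∀ y : L, ∃ i ∈ I, ∃ k ∈ K, i + k = y := fun y => by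
    have : y ∈ I.toSubmodule ⊔ K.toSubmodule := by rw [hsum]; trivial
    exact Submodule.mem_sup.1 this
  have zc : ∀ {z : L}, z ∈ LieAlgebra.center F L → ∀ y : L, ⁅z, y⁆ = 0 := fun {z} hz y => by
    rw [LieModule.mem_maxTrivSubmodule] at hz
    exact sk (hz y)
  have h3c : x 3 ∈ LieAlgebra.center F L := by
    rw [← hZI]
    refine ⟨hxI 3, fun y hy => ?_⟩
    obtain ⟨c, rfl⟩ := hIform y hy
    simp [sk b03, sk b13, sk b23]
  have hli := Fintype.linearIndependent_iff.1 hxind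
  have hcen : ∀ z ∈ LieAlgebra.center F L, ∃ c : F, z = c • x 3 := fun z hz => by
    obtain ⟨c, hc⟩ := hIform z ((hZI z).2 hz).1
    have e0 := sk (zc hz (x 0))
    have e1 := zc hz (x 1)
    rw [← hc] at e0 e1
    simp only [lie_add, add_lie, lie_smul, smul_lie, hx1, hx2, b03, b12, sk b12, sk b13, lie_self,
      smul_zero, zero_add, add_zero] at e0 e1
    have f0 := hli ![0, 0, c 1, c 2] (by simp [Fin.sum_univ_four, e0])
    have f1 := hli ![0, 0, c 0, 0] (by simp [Fin.sum_univ_four, e1])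
    have g1 := f0 2
    have g2 := f0 3
    have g0 := f1 2
    simp at g0 g1 g2
    exact ⟨c 3, by rw [← hc, g0, g1, g2]; simp⟩
  have hbr : ∀ i, ∀ k ∈ K, ∃ c : F, ⁅x i, k⁆ = c • x 3 := fun i k hk =>
    hcen _ (hIKZ _ (hxI i) k hk)
  have b2k : ∀ k ∈ K, ⁅x 2, k⁆ = 0 := fun k hk => by
    obtain ⟨a, ha⟩ := hbr 0 k hk
    obtain ⟨b, hb⟩ := hbr 1 k hk
    rw [← hx1, lie_lie, ha, hb]
    simp [b03, b13]
  have key : ∀ k ∈ K, ⁅x 1, k⁆ = 0 → k = 0 := fun k hk h1 => by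
    obtain ⟨a, ha⟩ := hbr 0 k hk
    have hc : k - a • x 2 ∈ LieAlgebra.center F L := by
      rw [LieModule.mem_maxTrivSubmodule]
      intro y
      obtain ⟨i, hi, l, hl, rfl⟩ := hLform y
      obtain ⟨c, rfl⟩ := hIform i hi
      simp [ha, h1, hx2, b12, b2k k hk, zc h3c, sk (b2k l hl), hKab l hl k hk, smul_comm a (c 0)]
    have hkI : k ∈ I := by
      have := I.add_mem ((hZI _).2 hc).1 (I.smul_mem a (hxI 2))
      simpa using this
    have : k ∈ I.toSubmodule ⊓ K.toSubmodule := ⟨hkI, hk⟩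
    rw [hIK] at this
    simpa using this
  obtain ⟨k, hk, hk1⟩ : ∃ k ∈ K, ⁅x 1, k⁆ = x 3 := by
    by_contra! hno
    apply hKne
    rw [LieSubalgebra.eq_bot_iff]
    intro k hk
    apply key k hk
    obtain ⟨b, hb⟩ := hbr 1 k hk
    by_cases h : b = 0
    · simp [hb, h]
    · exact absurd (by rw [lie_smul, hb, smul_smul, inv_mul_cancel₀ h, one_smul])
        (hno (b⁻¹ • k) (K.smul_mem _ hk))
  have hKform : ∀ w ∈ K, ∃ c : F, c • k = w := fun w hw => by
    obtain ⟨b, hb⟩ := hbr 1 w hw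
    refine ⟨b, ?_⟩
    have := key (w - b • k) (K.sub_mem hw (K.smul_mem _ hk)) (by simp [hb, hk1])
    exact (sub_eq_zero.1 this).symm
  have x3ne : x 3 ≠ 0 := hxind.ne_zero 3
  have hK1 : finrank F ↥K = 1 := by
    refine finrank_eq_one (⟨k, hk⟩ : K) ?_ ?_
    · intro h
      have : k = 0 := congrArg Subtype.val h
      rw [this, lie_zero] at hk1
      exact x3ne hk1.symm
    · rintro ⟨w, hw⟩
      obtain ⟨c, hc⟩ := hKform w hw
      exact ⟨c, Subtype.ext hc⟩
  have hL5 : finrank F L = 5 := by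
    have h := Submodule.finrank_sup_add_finrank_inf_eq I.toSubmodule K.toSubmodule
    rw [hsum, hIK, finrank_top, finrank_bot, hxspan, finrank_span_eq_card hxind] at h
    have h' : finrank F ↥K.toSubmodule = 1 := hK1
    rw [h'] at h
    simpa using h
  refine ⟨hK1, ?_, hL5, ?_⟩
  · apply le_antisymm
    · rw [Submodule.span_le]
      rintro z ⟨a, ha, b, hb, rfl⟩
      exact hIKZ a ha b hb
    · intro z hz
      obtain ⟨c, rfl⟩ := hcen z hz
      exact Submodule.subset_span ⟨x 1, hxI 1, c • k, K.smul_mem _ hk, by rw [lie_smul, hk1]⟩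
  · obtain ⟨a, ha⟩ := hbr 0 k hk
    let v : Fin 5 → L := ![x 0, x 1, x 2, k - a • x 2, x 3]
    have hv : ⊤ ≤ Submodule.span F (Set.range v) := by
      have m : ∀ i, v i ∈ Submodule.span F (Set.range v) := fun i =>
        Submodule.subset_span ⟨i, rfl⟩
      have m2 : x 2 ∈ Submodule.span F (Set.range v) := m 2
      have mk : k ∈ Submodule.span F (Set.range v) := by
        have := Submodule.add_mem _ (m 3) (Submodule.smul_mem _ a m2)
        simpa [v] using this
      rw [← hsum, hxspan]
      refine sup_le (Submodule.span_le.2 ?_) ?_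
      · rintro _ ⟨i, rfl⟩
        fin_cases i
        exacts [m 0, m 1, m 2, m 4]
      · intro w hw
        obtain ⟨c, rfl⟩ := hKform w hw
        exact Submodule.smul_mem _ c mk
    refine ⟨basisOfTopLeSpanOfCardEqFinrank v hv (by simp [hL5]), ?_⟩
    simp only [coe_basisOfTopLeSpanOfCardEqFinrank]
    refine ⟨hx1, hx2, ?_, ?_⟩
    · simp [v, hk1, b12]
    · intro i j hij h1 h2 h3
      have z0 : ⁅x 0, k - a • x 2⁆ = 0 := by simp [ha, hx2]
      have z2 : ⁅x 2, k - a • x 2⁆ = 0 := by simp [b2k k hk]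
      have z3 : ⁅k - a • x 2, x 3⁆ = 0 := sk (zc h3c _)
      fin_cases i <;> fin_cases j <;> first
        | exact absurd hij (by decide)
        | exact absurd rfl h1
        | exact absurd rfl h2
        | exact absurd rfl h3
        | exact z0
        | exact z2
        | exact z3
        | exact b03
        | exact b12
        | exact b13
        | exact b23
end
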